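/- (Proposition 1 of the paper) The Grassmann-odd quantity ν_F = ν_F^{(0)} + ν^{(1)}/8 - ν^{(2)}/24 is a solution of the differential equation Δ_F² - (1/2)Δ_{F,R} = (ν_F, ·), even if the line bundle connection F is not flat. -/

import Mathlib

/-!
Write `K^a = E^{ab} ∂_b` for the Hamiltonian vector field of the coordinate `Γ^a` and
`∇_a = ∂_a + F_a`, so that `2Δ_F = (-1)^{ε_a} ∇_a K^a`. In `4Δ_F² = ± ∇_a K^a ∇_b K^b` one moves
`K^a` past `∇_b` (`K_N`) and uses two graded commutators: `[∇_a, ∇_b]` is the curvature (`N_N`),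
and the Jacobi identity says that `[K^a, K^b]` is the Hamiltonian vector field of `E^{ab}` (`K_K`).
The result (`four_lap_sq`, `N_N_K_K`) is a sum of terms acting on the functions `K^c f`.

The terms with derivatives of the connection, after subtraction of `2Δ_{F,R}`, are linear over
functions in `K^c f` (`curvature_part`); this is why flatness is not needed. The remaining terms
are a function times `K^c f` plus a pure second-order term (`second_order`). All function
coefficients together are `∂_c (4 ν_F^{(0)} + ν^{(1)}/2)` (`coefficient`).

The pure second-order term is itself a vector field with components
`Q^d = (-1)^{ε_a (ε_b + 1)} (∂_c E^{ab}) (∂_a ∂_b E^{cd})`, since its third-order part vanishes by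
Jacobi and its second-order part by symmetry (`second_order_residue`). Differentiating `ν^{(2)}`
along `K^m` and using the Jacobi identity for `E` and for its inverse gives `K^m ν^{(2)} = -3 Q^m`
(`K_nu2_eq`), which accounts for the summand `-ν^{(2)}/24` of `ν_F`.

All sign bookkeeping is finite: once the factors of the summands are in a common order, the
parities are generalized to elements of `ZMod 2`, `zmod_forall` splits the claim into all parity
cases, and in each case the identity is linear over `ℚ`.
-/

open scoped BigOperators

noncomputable section

/-- The sign `(-1)^p` for a parity `p : ZMod 2`, valued in `ℚ`. -/
def sgn (p : ZMod 2) : ℚ := if p = 0 then 1 else -1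

/-- A supercommutative algebra of "functions on a superdomain" with local coordinates
`coord i`, Grassmann parities `ε i`, and left partial derivatives `D i`. -/
structure SuperAlg (ι : Type) [Fintype ι] [DecidableEq ι]
    (A : Type) [Ring A] [Algebra ℚ A] where
  ε : ι → ZMod 2
  hom : ZMod 2 → Submodule ℚ A
  one_mem : (1 : A) ∈ hom 0
  mul_mem : ∀ {p q : ZMod 2} {a b : A}, a ∈ hom p → b ∈ hom q → a * b ∈ hom (p + q)
  supercomm : ∀ {p q : ZMod 2} {a b : A}, a ∈ hom p → b ∈ hom q →
    a * b = sgn (p * q) • (b * a)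
  D : ι → A →ₗ[ℚ] A
  D_mem : ∀ (i : ι) {p : ZMod 2} {a : A}, a ∈ hom p → D i a ∈ hom (p + ε i)
  D_leibniz : ∀ (i : ι) {p : ZMod 2} {a : A} (b : A), a ∈ hom p →
    D i (a * b) = D i a * b + sgn (ε i * p) • (a * D i b)
  D_comm : ∀ (i j : ι) (a : A), D i (D j a) = sgn (ε i * ε j) • D j (D i a)
  coord : ι → A
  coord_mem : ∀ i, coord i ∈ hom (ε i)
  D_coord : ∀ i j, D i (coord j) = if i = j then (1 : A) else 0

namespace SuperAlg

variable {ι : Type} [Fintype ι] [DecidableEq ι]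
variable {A : Type} [Ring A] [Algebra ℚ A]

/-- The operator of left multiplication by `f`. -/
def L (f : A) : A →ₗ[ℚ] A := LinearMap.mulLeft ℚ f

/-- The graded commutator `[T,U] = T∘U - (-1)^{pq} U∘T` of operators of parities `p`, `q`. -/
def gcomm (p q : ZMod 2) (T U : A →ₗ[ℚ] A) : A →ₗ[ℚ] A :=
  T ∘ₗ U - sgn (p * q) • (U ∘ₗ T)

variable (S : SuperAlg ι A)

/-- The bracket `(f,g) = (f ∂⃖_A) M^{AB} (∂_B g)` built from the matrix `M`,
for `f` homogeneous of parity `pf`; the right derivative is expressed through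
the left one via `f ∂⃖_A = (-1)^{ε_A (ε_f + 1)} ∂_A f`. -/
def brkt (M : ι → ι → A) (pf : ZMod 2) (f g : A) : A :=
  ∑ a, ∑ b, sgn (S.ε a * (pf + 1)) • (S.D a f * (M a b * S.D b g))

/-- The first-order operator `(x, ·)` (for Grassmann-odd `x`), built from the matrix `M`. -/
def Hop (M : ι → ι → A) (x : A) : A →ₗ[ℚ] A :=
  ∑ a, ∑ b, L (S.D a x) ∘ₗ L (M a b) ∘ₗ S.D b

/-- The Laplacian `((-1)^{ε_A}/2)(∂_A + F_A) M^{AB} ∂_B`. -/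
def lap (F : ι → A) (M : ι → ι → A) : A →ₗ[ℚ] A :=
  (1/2 : ℚ) • ∑ a, ∑ b, sgn (S.ε a) •
    ((S.D a ∘ₗ L (M a b) ∘ₗ S.D b) + (L (F a) ∘ₗ L (M a b) ∘ₗ S.D b))

/-- The curvature `R_{AB} = (∂_A F_B) - (-1)^{ε_A ε_B}(∂_B F_A)` of a line bundle
connection `F`. -/
def curv (F : ι → A) (a b : ι) : A :=
  S.D a (F b) - sgn (S.ε a * S.ε b) • S.D b (F a)

/-- The raised-index curvature `R^{AD} = E^{AB} R_{BC} E^{CD} (-1)^{ε_C}`. -/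
def curvUp (E : ι → ι → A) (F : ι → A) (a d : ι) : A :=
  ∑ b, ∑ c, sgn (S.ε c) • (E a b * (S.curv F b c * E c d))

/-- The graded Jacobi identity for the antibracket, on homogeneous functions. -/
def JacobiId (E : ι → ι → A) : Prop :=
  ∀ (pf pg ph : ZMod 2) (f g h : A),
    f ∈ S.hom pf → g ∈ S.hom pg → h ∈ S.hom ph →
      sgn ((pf + 1) * (ph + 1)) • S.brkt E pf f (S.brkt E pg g h)
      + sgn ((pg + 1) * (pf + 1)) • S.brkt E pg g (S.brkt E ph h f)
      + sgn ((ph + 1) * (pg + 1)) • S.brkt E ph h (S.brkt E pf f g) = 0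

/-- The closedness relation `Σ_{cycl. A,B,C} (-1)^{ε_A ε_C} (∂_A E_{BC}) = 0`
for the two-form with components `Einv`. -/
def ClosedId (Einv : ι → ι → A) : Prop :=
  ∀ a b c : ι,
    sgn (S.ε a * S.ε c) • S.D a (Einv b c)
    + sgn (S.ε b * S.ε a) • S.D b (Einv c a)
    + sgn (S.ε c * S.ε b) • S.D c (Einv a b) = 0

/-- The Jacobi identity `Σ_{cycl. A,B,C} (-1)^{(ε_A+1)(ε_C+1)} E^{AD} (∂_D E^{BC}) = 0`
in terms of the matrix `E^{AB}`. -/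
def EJacobiId (E : ι → ι → A) : Prop :=
  ∀ a b c : ι,
    ∑ d, (sgn ((S.ε a + 1) * (S.ε c + 1)) • (E a d * S.D d (E b c))
      + sgn ((S.ε b + 1) * (S.ε a + 1)) • (E b d * S.D d (E c a))
      + sgn ((S.ε c + 1) * (S.ε b + 1)) • (E c d * S.D d (E a b))) = 0

/-- `E` is a non-degenerate graded-skewsymmetric (2,0)-tensor with inverse `Einv`. -/
structure AntiSymp (E Einv : ι → ι → A) : Prop where
  E_mem : ∀ a b, E a b ∈ S.hom (S.ε a + S.ε b + 1)
  E_skew : ∀ a b, E a b = - sgn ((S.ε a + 1) * (S.ε b + 1)) • E b a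
  Einv_mem : ∀ a b, Einv a b ∈ S.hom (S.ε a + S.ε b + 1)
  Einv_skew : ∀ a b, Einv a b = - sgn (S.ε a * S.ε b) • Einv b a
  mul_inv : ∀ a c, ∑ b, E a b * Einv b c = if a = c then (1 : A) else 0
  inv_mul : ∀ a c, ∑ b, Einv a b * E b c = if a = c then (1 : A) else 0

/-- An operator `T` of parity `pT` is of at most first order iff all its double graded
commutators with left multiplication operators vanish. -/
def IsFirstOrder (pT : ZMod 2) (T : A →ₗ[ℚ] A) : Prop :=
  ∀ (pf pg : ZMod 2) (f g : A), f ∈ S.hom pf → g ∈ S.hom pg →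
    gcomm (pT + pf) pg (gcomm pT pf T (L f)) (L g) = 0

/-- The third-order terms of an operator `T` of parity `pT` vanish iff all its triple
graded commutators with left multiplication operators vanish. -/
def ThirdOrderVanish (pT : ZMod 2) (T : A →ₗ[ℚ] A) : Prop :=
  ∀ (pf pg ph : ZMod 2) (f g h : A),
    f ∈ S.hom pf → g ∈ S.hom pg → h ∈ S.hom ph →
      gcomm (pT + pf + pg) ph
        (gcomm (pT + pf) pg (gcomm pT pf T (L f)) (L g)) (L h) = 0

/-- `ν_F^{(0)} = ((-1)^{ε_A}/4)(∂_A + F_A/2)(E^{AB} F_B)`. -/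
def nuF0 (E : ι → ι → A) (F : ι → A) : A :=
  (1/4 : ℚ) • ∑ a, ∑ b, sgn (S.ε a) •
    (S.D a (E a b * F b) + (1/2 : ℚ) • (F a * (E a b * F b)))

/-- `ν^{(1)} = (-1)^{ε_A} (∂_B ∂_A E^{AB})`. -/
def nu1 (E : ι → ι → A) : A :=
  ∑ a, ∑ b, sgn (S.ε a) • S.D b (S.D a (E a b))

/-- `ν^{(2)} = (-1)^{ε_A ε_C} (∂_D E^{AB}) E_{BC} (∂_A E^{CD})`. -/
def nu2 (E Einv : ι → ι → A) : A :=
  ∑ a, ∑ b, ∑ c, ∑ d, sgn (S.ε a * S.ε c) •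
    (S.D d (E a b) * (Einv b c * S.D a (E c d)))

/-- `ν_F = ν_F^{(0)} + ν^{(1)}/8 - ν^{(2)}/24`. -/
def nuF (E Einv : ι → ι → A) (F : ι → A) : A :=
  S.nuF0 E F + (1/8 : ℚ) • S.nu1 E - (1/24 : ℚ) • S.nu2 E Einv

/-- The divergence `div_1 X = (-1)^{ε_A} (∂_A X^A)`. -/
def div1 (X : ι → A) : A := ∑ a, sgn (S.ε a) • S.D a (X a)

/-- A form variation (infinitesimal coordinate transformation `δΓ^A = X^A`, compared
at the same argument): an even derivation commuting with the partial derivatives. -/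
structure FormVar (X : ι → A) (δv : A →ₗ[ℚ] A) : Prop where
  deriv : ∀ a b : A, δv (a * b) = δv a * b + a * δv b
  commD : ∀ (i : ι) (a : A), δv (S.D i a) = S.D i (δv a)
  X_mem : ∀ i, X i ∈ S.hom (S.ε i)

/-- The form variation of a (2,0)-tensor `E^{AB}` under `δΓ^A = X^A`:
`δE^{AB} = (X^A ∂⃖_C) E^{CB} + E^{AC}(∂_C X^B) - X^C (∂_C E^{AB})`. -/
def VarE (X : ι → A) (δv : A →ₗ[ℚ] A) (E : ι → ι → A) : Prop :=
  ∀ a b, δv (E a b) =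
    (∑ c, sgn (S.ε c * (S.ε a + 1)) • (S.D c (X a) * E c b))
    + (∑ c, E a c * S.D c (X b))
    - ∑ c, X c * S.D c (E a b)

/-- The form variation of a line bundle connection `F_A` under `δΓ^A = X^A`:
`δF_A = -(∂_A X^B) F_B - ∂_A(div_1 X) - X^C (∂_C F_A)`. -/
def VarF (X : ι → A) (δv : A →ₗ[ℚ] A) (F : ι → A) : Prop :=
  ∀ a, δv (F a) =
    - (∑ b, S.D a (X b) * F b) - S.D a (S.div1 X) - ∑ c, X c * S.D c (F a)

/-- Khudaverdian–Voronov's odd quantity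
`ν(F¹;F²,E) = ((-1)^{ε_A}/4)(∂_A + (F¹_A+F²_A)/2)(E^{AB}(F¹_B - F²_B))`. -/
def nu12 (E : ι → ι → A) (F1 F2 : ι → A) : A :=
  (1/4 : ℚ) • ∑ a, ∑ b, sgn (S.ε a) •
    (S.D a (E a b * (F1 b - F2 b))
      + (1/2 : ℚ) • ((F1 a + F2 a) * (E a b * (F1 b - F2 b))))

/-- The odd Laplacian `Δ_ρ = ((-1)^{ε_A}/(2ρ)) ∂_A ρ E^{AB} ∂_B` for a density `ρ`
with inverse `ρinv`. -/
def lapRho (E : ι → ι → A) (ρ ρinv : A) : A →ₗ[ℚ] A :=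
  (1/2 : ℚ) • ∑ a, ∑ b, sgn (S.ε a) •
    (L ρinv ∘ₗ S.D a ∘ₗ L ρ ∘ₗ L (E a b) ∘ₗ S.D b)

/-- `ν_ρ^{(0)} = (Δ_1 √ρ)/√ρ`, where `sq = √ρ` and `sqinv = 1/√ρ`. -/
def nuRho0 (E : ι → ι → A) (sq sqinv : A) : A :=
  sqinv * (S.lap (fun _ => (0 : A)) E sq)

/-- `ν_ρ = ν_ρ^{(0)} + ν^{(1)}/8 - ν^{(2)}/24`. -/
def nuRho (E Einv : ι → ι → A) (sq sqinv : A) : A :=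
  S.nuRho0 E sq sqinv + (1/8 : ℚ) • S.nu1 E - (1/24 : ℚ) • S.nu2 E Einv

/-- Khudaverdian's operator `Δ_E = Δ_1 + ν^{(1)}/8 - ν^{(2)}/24`. -/
def lapE (E Einv : ι → ι → A) : A →ₗ[ℚ] A :=
  S.lap (fun _ => (0 : A)) E + L ((1/8 : ℚ) • S.nu1 E - (1/24 : ℚ) • S.nu2 E Einv)

/-- The reordered Christoffel symbols `Γ^A{}_{BC} = (-1)^{ε_A ε_B} Γ_B{}^A{}_C`. -/
def Gup (Gm : ι → ι → ι → A) (a b c : ι) : A := sgn (S.ε a * S.ε b) • Gm b a c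

/-- The reordered Riemann curvature tensor
`R^A{}_{BCD} = (-1)^{ε_A ε_B}(∂_B Γ^A{}_{CD}) + Γ^A{}_{BE} Γ^E{}_{CD} - (-1)^{ε_B ε_C}(B ↔ C)`,
expressed through the reordered Christoffel symbols `Gu = Γ^·{}_{··}`. -/
def riemRe (Gu : ι → ι → ι → A) (a b c d : ι) : A :=
  sgn (S.ε a * S.ε b) • S.D b (Gu a c d) + (∑ e, Gu a b e * Gu e c d)
  - sgn (S.ε b * S.ε c) •
      (sgn (S.ε a * S.ε c) • S.D c (Gu a b d) + ∑ e, Gu a c e * Gu e b d)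

/-- The Ricci tensor `R_{AB} = R^C{}_{CAB}`. -/
def ricci (Gu : ι → ι → ι → A) (a b : ι) : A := ∑ c, S.riemRe Gu c c a b

/-- The odd scalar curvature `R = R_{AB} E^{BA}`. -/
def scalarR (Gu : ι → ι → ι → A) (E : ι → ι → A) : A :=
  ∑ a, ∑ b, S.ricci Gu a b * E b a

/-- The Riemann curvature tensor
`R_{AB}{}^C{}_D = (∂_A Γ_B{}^C{}_D) + (-1)^{ε_B ε_C} Γ_A{}^C{}_E Γ^E{}_{BD} - (-1)^{ε_A ε_B}(A ↔ B)`,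
built from the Christoffel symbols `Gm = Γ_·{}^·{}_·`. -/
def riem (Gm : ι → ι → ι → A) (a b c d : ι) : A :=
  S.D a (Gm b c d) + sgn (S.ε b * S.ε c) • (∑ e, Gm a c e * S.Gup Gm e b d)
  - sgn (S.ε a * S.ε b) •
      (S.D b (Gm a c d) + sgn (S.ε a * S.ε c) • ∑ e, Gm b c e * S.Gup Gm e a d)

/-- The Christoffel symbols with three lower indices,
`Γ_{ABC} = E_{AD} Γ^D{}_{BC} (-1)^{ε_B}`, built from `Gu = Γ^·{}_{··}`. -/
def Glow (Einv : ι → ι → A) (Gu : ι → ι → ι → A) (a b c : ι) : A :=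
  sgn (S.ε b) • ∑ d, Einv a d * Gu d b c

/-- `γ_{ABC} = Γ_{ABC} - (1/3)(E_{AB} ∂⃖_C + E_{AC} ∂⃖_B (-1)^{ε_B ε_C})`. -/
def gam (Einv : ι → ι → A) (Gu : ι → ι → ι → A) (a b c : ι) : A :=
  S.Glow Einv Gu a b c
  - (1/3 : ℚ) • (sgn (S.ε c * (S.ε a + S.ε b)) • S.D c (Einv a b)
      + sgn (S.ε b * S.ε c) • (sgn (S.ε b * (S.ε a + S.ε c)) • S.D b (Einv a c)))

end SuperAlg

namespace SuperAlg

-- The sign checks share one simp set, of which a given check uses only a part.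
set_option linter.unusedSimpArgs false
set_option linter.unusedSectionVars false

/-! ### Signs and graded commutation -/

theorem sgn_zero : sgn 0 = 1 := rfl

theorem sgn_one : sgn 1 = -1 := rfl

theorem sgn_mul_self (p : ZMod 2) : sgn p * sgn p = 1 := by
  unfold sgn; split_ifs <;> norm_num

theorem one_add_one_zmod : (1 + 1 : ZMod 2) = 0 := rfl

theorem zmod_cases {P : ZMod 2 → Prop} (h0 : P 0) (h1 : P 1) (p : ZMod 2) : P p := by
  fin_cases p
  · exact h0
  · exact h1

theorem sgn_add (p q : ZMod 2) : sgn (p + q) = sgn p * sgn q := by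
  revert p q
  refine zmod_cases (zmod_cases ?_ ?_) (zmod_cases ?_ ?_) <;>
    simp [sgn_zero, sgn_one, one_add_one_zmod]

/-- Used to turn an identity between signs into its finitely many parity cases. -/
theorem zmod_forall {P : ZMod 2 → Prop} : (∀ p, P p) ↔ P 0 ∧ P 1 :=
  ⟨fun h => ⟨h 0, h 1⟩, fun h => zmod_cases h.1 h.2⟩

section

variable {ι : Type} [Fintype ι] [DecidableEq ι] {A : Type} [Ring A] [Algebra ℚ A]
  {S : SuperAlg ι A}

theorem mul_lcomm {p q : ZMod 2} {x y : A} (hx : x ∈ S.hom p) (hy : y ∈ S.hom q) (z : A) :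
    x * (y * z) = sgn (p * q) • (y * (x * z)) := by
  rw [← mul_assoc, S.supercomm hx hy, smul_mul_assoc, mul_assoc]

theorem D_one (i : ι) : S.D i 1 = 0 := by
  have h := S.D_leibniz i (1 : A) S.one_mem
  simpa [sgn_zero] using h

/-- The Hamiltonian vector field `K^a = E^{ab} ∂_b` of the coordinate `Γ^a`. -/
def K (S : SuperAlg ι A) (E : ι → ι → A) (a : ι) : A →ₗ[ℚ] A := ∑ b, L (E a b) ∘ₗ S.D b

/-- The covariant derivative `∇_a = ∂_a + F_a` of the line bundle connection. -/
def N (S : SuperAlg ι A) (F : ι → A) (a : ι) : A →ₗ[ℚ] A := S.D a + L (F a)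

theorem K_apply (E : ι → ι → A) (a : ι) (f : A) : K S E a f = ∑ b, E a b * S.D b f := by
  simp [K, L]

theorem N_apply (F : ι → A) (a : ι) (f : A) : N S F a f = S.D a f + F a * f := by
  simp [N, L]

variable {E Einv : ι → ι → A} {F : ι → A}

/-- The graded skewsymmetry of `E`, with its sign written as a single `sgn`. -/
theorem E_sk (hE : S.AntiSymp E Einv) (a b : ι) :
    E a b = sgn (S.ε a * S.ε b + S.ε a + S.ε b) • E b a := by
  rw [hE.E_skew a b]
  generalize S.ε a = a', S.ε b = b'
  revert a' b'
  simp only [zmod_forall, sgn_zero, sgn_one, one_add_one_zmod, mul_zero, zero_mul, mul_one,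
    add_zero, zero_add]
  and_intros <;> trivial

theorem DE_mem (hE : S.AntiSymp E Einv) (c a b : ι) :
    S.D c (E a b) ∈ S.hom (S.ε a + S.ε b + 1 + S.ε c) := S.D_mem c (hE.E_mem a b)

theorem DDE_mem (hE : S.AntiSymp E Einv) (d c a b : ι) :
    S.D d (S.D c (E a b)) ∈ S.hom (S.ε a + S.ε b + 1 + S.ε c + S.ε d) :=
  S.D_mem d (DE_mem hE c a b)

/-- The Jacobi identity in components: it is the identity for three coordinate functions. -/
theorem eJacobi (hJ : S.JacobiId E) (a b c : ι) :
    sgn ((S.ε a + 1) * (S.ε c + 1)) • K S E a (E b c)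
      + sgn ((S.ε b + 1) * (S.ε a + 1)) • K S E b (E c a)
      + sgn ((S.ε c + 1) * (S.ε b + 1)) • K S E c (E a b) = 0 := by
  have hs : ∀ p : ZMod 2, sgn (p * (p + 1)) = 1 := zmod_cases rfl rfl
  have h1 : ∀ (i : ι) (f : A), S.brkt E (S.ε i) (S.coord i) f = K S E i f := by
    intro i f
    rw [K_apply, brkt, Finset.sum_eq_single i]
    · simp [S.D_coord, hs]
    · intro b _ hb
      simp [S.D_coord, hb]
    · simp
  have h2 : ∀ i j : ι, K S E i (S.coord j) = E i j := by
    intro i j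
    simp [K_apply, S.D_coord]
  have h := hJ _ _ _ _ _ _ (S.coord_mem a) (S.coord_mem b) (S.coord_mem c)
  simpa only [h1, h2] using h

/-- Moving `K^a` past `∇_b`: besides the graded commutation sign there is a term from
`∂_b E^{ac}` and a term from `∂_c F_b`. -/
theorem K_N (hE : S.AntiSymp E Einv) (hF : ∀ a, F a ∈ S.hom (S.ε a)) (a b : ι) (f : A) :
    K S E a (N S F b f) = sgn ((S.ε a + 1) * S.ε b) •
        (N S F b (K S E a f) - ∑ c, S.D b (E a c) * S.D c f)
      + ∑ c, E a c * (S.D c (F b) * f) := by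
  simp only [K_apply, N_apply, map_sum, Finset.mul_sum, ← Finset.sum_add_distrib,
    ← Finset.sum_sub_distrib, Finset.smul_sum]
  refine Finset.sum_congr rfl fun c _ => ?_
  rw [map_add, S.D_leibniz c _ (hF b), S.D_leibniz b _ (hE.E_mem a c),
    mul_lcomm (hF b) (hE.E_mem a c), S.D_comm c b]
  simp only [mul_add, mul_smul_comm]
  generalize S.ε a = a', S.ε b = b', S.ε c = c'
  revert a' b' c'
  simp only [zmod_forall, sgn_zero, sgn_one, one_add_one_zmod, mul_zero, zero_mul, mul_one,
    add_zero, zero_add]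
  and_intros <;> first | trivial | module

/-- The operator form of the Jacobi identity: the graded commutator of the Hamiltonian vector
fields `K^a` and `K^b` is, up to sign, the Hamiltonian vector field of `E^{ab} = (Γ^a, Γ^b)`. -/
theorem K_K (hE : S.AntiSymp E Einv) (hJ : S.JacobiId E) (a b : ι) (f : A) :
    K S E a (K S E b f) + sgn (S.ε a * S.ε b + S.ε a + S.ε b) • K S E b (K S E a f)
      = ∑ c, sgn (S.ε c * (S.ε a + S.ε b)) • (S.D c (E a b) * K S E c f) := by
  -- The product splits into a first-order part and a part with two derivatives of `f`; the
  -- latter cancels by symmetry and the former is governed by `eJacobi`.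
  have expand : ∀ a b : ι, K S E a (K S E b f) = ∑ d, K S E a (E b d) * S.D d f +
      ∑ d, ∑ c, sgn (S.ε c * (S.ε b + S.ε d + 1)) • (E a c * (E b d * S.D c (S.D d f))) := by
    intro a b
    rw [K_apply E b, map_sum, ← Finset.sum_add_distrib]
    refine Finset.sum_congr rfl fun d _ => ?_
    rw [K_apply, K_apply, Finset.sum_mul, ← Finset.sum_add_distrib]
    refine Finset.sum_congr rfl fun c _ => ?_
    rw [S.D_leibniz c _ (hE.E_mem b d), mul_add, mul_smul_comm, mul_assoc]
  have second : ∑ d, ∑ c, sgn (S.ε c * (S.ε b + S.ε d + 1)) •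
        (E a c * (E b d * S.D c (S.D d f)))
      + sgn (S.ε a * S.ε b + S.ε a + S.ε b) • ∑ d, ∑ c, sgn (S.ε c * (S.ε a + S.ε d + 1)) •
        (E b c * (E a d * S.D c (S.D d f))) = 0 := by
    rw [Finset.sum_comm (f := fun d c => sgn (S.ε c * (S.ε a + S.ε d + 1)) •
        (E b c * (E a d * S.D c (S.D d f))))]
    simp only [Finset.smul_sum, ← Finset.sum_add_distrib]
    refine Finset.sum_eq_zero fun d _ => Finset.sum_eq_zero fun c _ => ?_
    rw [mul_lcomm (hE.E_mem b d) (hE.E_mem a c), S.D_comm d c]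
    simp only [mul_smul_comm]
    generalize S.ε a = a', S.ε b = b', S.ε c = c', S.ε d = d'
    revert a' b' c' d'
    simp only [zmod_forall, sgn_zero, sgn_one, one_add_one_zmod, mul_zero, zero_mul, mul_one,
      add_zero, zero_add]
    and_intros <;> first | trivial | module
  have first : ∑ d, K S E a (E b d) * S.D d f
      + sgn (S.ε a * S.ε b + S.ε a + S.ε b) • ∑ d, K S E b (E a d) * S.D d f
      = ∑ c, sgn (S.ε c * (S.ε a + S.ε b)) • (S.D c (E a b) * K S E c f) := by
    have h1 : ∑ c, sgn (S.ε c * (S.ε a + S.ε b)) • (S.D c (E a b) * K S E c f)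
        = - ∑ d, sgn ((S.ε a + S.ε b) * (S.ε d + 1)) •
            (K S E d (E a b) * S.D d f) := by
      simp only [K_apply, Finset.mul_sum, Finset.sum_mul, Finset.smul_sum]
      rw [Finset.sum_comm, ← Finset.sum_neg_distrib]
      refine Finset.sum_congr rfl fun d _ => ?_
      rw [← Finset.sum_neg_distrib]
      refine Finset.sum_congr rfl fun c _ => ?_
      rw [mul_lcomm (DE_mem hE c a b) (hE.E_mem c d), E_sk hE c d]
      simp only [smul_mul_assoc, mul_assoc]
      generalize S.ε a = a', S.ε b = b', S.ε c = c', S.ε d = d'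
      revert a' b' c' d'
      simp only [zmod_forall, sgn_zero, sgn_one, one_add_one_zmod, mul_zero, zero_mul, mul_one,
        add_zero, zero_add]
      and_intros <;> first | trivial | module
    rw [h1, ← Finset.sum_neg_distrib, Finset.smul_sum, ← Finset.sum_add_distrib]
    refine Finset.sum_congr rfl fun d _ => ?_
    have h := congrArg (· * S.D d f) (eJacobi hJ a b d)
    rw [E_sk hE a d]
    simp only [add_mul, smul_mul_assoc, map_smul, zero_mul] at h ⊢
    revert h
    generalize S.ε a = a', S.ε b = b', S.ε d = d'
    revert a' b' d'
    simp only [zmod_forall, sgn_zero, sgn_one, one_add_one_zmod, mul_zero, zero_mul, mul_one,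
      add_zero, zero_add]
    and_intros <;> intro h <;>
      first
      | linear_combination (norm := module) (1 : ℚ) • h
      | linear_combination (norm := module) (-1 : ℚ) • h
  rw [expand a b, expand b a, ← first]
  linear_combination (norm := module) (1 : ℚ) • second

end

/-! ### The square of the odd Laplacian -/

section

variable {ι : Type} [Fintype ι] [DecidableEq ι] {A : Type} [Ring A] [Algebra ℚ A]
  {S : SuperAlg ι A} {E Einv : ι → ι → A} {F : ι → A}

theorem lap_apply (M : ι → ι → A) (f : A) :
    S.lap F M f = (1/2 : ℚ) • ∑ a, sgn (S.ε a) • N S F a (∑ b, M a b * S.D b f) := by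
  simp only [lap, N_apply, L, LinearMap.smul_apply, LinearMap.sum_apply, LinearMap.add_apply,
    LinearMap.comp_apply, LinearMap.mulLeft_apply, map_sum, Finset.mul_sum, ← Finset.sum_add_distrib,
    Finset.smul_sum]

theorem Hop_apply (x f : A) : S.Hop E x f = ∑ c, S.D c x * K S E c f := by
  simp only [Hop, K_apply, L, LinearMap.sum_apply,
    LinearMap.comp_apply, LinearMap.mulLeft_apply, Finset.mul_sum]

theorem curv_mem (hF : ∀ a, F a ∈ S.hom (S.ε a)) (a b : ι) :
    S.curv F a b ∈ S.hom (S.ε a + S.ε b) := by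
  have h1 := S.D_mem a (hF b)
  have h2 := S.D_mem b (hF a)
  rw [add_comm] at h1
  exact Submodule.sub_mem _ h1 (Submodule.smul_mem _ _ h2)

/-- The curvature is the graded commutator of the covariant derivatives. -/
theorem N_N (hF : ∀ a, F a ∈ S.hom (S.ε a)) (a b : ι) (f : A) :
    N S F a (N S F b f) - sgn (S.ε a * S.ε b) • N S F b (N S F a f) = S.curv F a b * f := by
  simp only [N_apply, map_add, S.D_leibniz a _ (hF b), S.D_leibniz b _ (hF a), curv, sub_mul,
    mul_add, smul_mul_assoc]
  rw [S.D_comm a b, mul_lcomm (hF a) (hF b)]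
  generalize S.ε a = a', S.ε b = b'
  revert a' b'
  simp only [zmod_forall, sgn_zero, sgn_one, one_add_one_zmod, mul_zero, zero_mul, mul_one,
    add_zero, zero_add]
  and_intros <;> first | trivial | module

/-- The square `4Δ_F² = ±∇_a K^a ∇_b K^b`, with the inner `K^a` moved past `∇_b` by `K_N`. -/
theorem four_lap_sq (hE : S.AntiSymp E Einv) (hF : ∀ a, F a ∈ S.hom (S.ε a)) (f : A) :
    (4 : ℚ) • S.lap F E (S.lap F E f) =
      ∑ a, ∑ b, sgn (S.ε a + S.ε a * S.ε b) • N S F a (N S F b (K S E a (K S E b f)))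
      - ∑ c, ∑ a, ∑ b, sgn (S.ε a + S.ε a * S.ε c) •
          N S F a (S.D c (E a b) * S.D b (K S E c f))
      + ∑ c, ∑ a, ∑ b, sgn (S.ε a + S.ε c) •
          N S F a (E a b * (S.D b (F c) * K S E c f)) := by
  have h : ∀ g, S.lap F E g = (1/2 : ℚ) • ∑ a, sgn (S.ε a) • N S F a (K S E a g) := by
    intro g
    simp only [lap_apply, K_apply]
  rw [Finset.sum_comm (f := fun c a => ∑ b, sgn (S.ε a + S.ε a * S.ε c) •
          N S F a (S.D c (E a b) * S.D b (K S E c f))),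
    Finset.sum_comm (f := fun c a => ∑ b, sgn (S.ε a + S.ε c) •
          N S F a (E a b * (S.D b (F c) * K S E c f)))]
  simp only [h, map_smul, map_sum, Finset.smul_sum, ← Finset.sum_add_distrib,
    ← Finset.sum_sub_distrib]
  refine Finset.sum_congr rfl fun a _ => Finset.sum_congr rfl fun b _ => ?_
  rw [K_N hE hF]
  simp only [map_add, map_sub, map_smul, map_sum, ← Finset.smul_sum]
  generalize S.ε a = a', S.ε b = b'
  revert a' b'
  simp only [zmod_forall, sgn_zero, sgn_one, one_add_one_zmod, mul_zero, zero_mul, mul_one,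
    add_zero, zero_add]
  and_intros <;> first | trivial | module

/-- The leading term `∇_a ∇_b K^a K^b` of `4Δ_F²`. Exchanging `a` and `b` in half of it replaces
`∇_a ∇_b` and `K^a K^b` by their graded commutators, that is, by the curvature and by a
Hamiltonian vector field. -/
theorem N_N_K_K (hE : S.AntiSymp E Einv) (hF : ∀ a, F a ∈ S.hom (S.ε a)) (hJ : S.JacobiId E)
    (f : A) :
    ∑ a, ∑ b, sgn (S.ε a + S.ε a * S.ε b) • N S F a (N S F b (K S E a (K S E b f)))
      = (1/2 : ℚ) • ∑ c, ∑ a, ∑ b,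
          sgn (S.ε a + S.ε a * S.ε b + S.ε c * S.ε a + S.ε c * S.ε b) •
            N S F a (N S F b (S.D c (E a b) * K S E c f))
        - (1/2 : ℚ) • ∑ a, ∑ b, sgn (S.ε b) • (S.curv F a b * K S E b (K S E a f)) := by
  have h1 : ∑ c, ∑ a, ∑ b,
          sgn (S.ε a + S.ε a * S.ε b + S.ε c * S.ε a + S.ε c * S.ε b) •
            N S F a (N S F b (S.D c (E a b) * K S E c f)) =
      ∑ a, ∑ b, sgn (S.ε a + S.ε a * S.ε b) • N S F a (N S F b (K S E a (K S E b f)))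
      + ∑ a, ∑ b, sgn (S.ε b) • N S F a (N S F b (K S E b (K S E a f))) := by
    rw [Finset.sum_comm]
    simp only [← Finset.sum_add_distrib]
    refine Finset.sum_congr rfl fun a _ => ?_
    rw [Finset.sum_comm]
    refine Finset.sum_congr rfl fun b _ => ?_
    have h := congrArg (fun x => sgn (S.ε a + S.ε a * S.ε b) • N S F a (N S F b x))
      (K_K hE hJ a b f)
    simp only [map_add, map_smul, map_sum, Finset.smul_sum, smul_smul, smul_add] at h
    simp only [← sgn_add] at h
    convert h.symm using 3
    · ring_nf
    · congr 1
      generalize S.ε a = a', S.ε b = b'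
      revert a' b'
      decide
  have h2 : ∑ a, ∑ b, sgn (S.ε b) • N S F a (N S F b (K S E b (K S E a f)))
      = ∑ a, ∑ b, sgn (S.ε b) • (S.curv F a b * K S E b (K S E a f)) +
       ∑ a, ∑ b, sgn (S.ε a + S.ε a * S.ε b) • N S F a (N S F b (K S E a (K S E b f))) := by
    rw [Finset.sum_comm (f := fun a b =>
      sgn (S.ε a + S.ε a * S.ε b) • N S F a (N S F b (K S E a (K S E b f))))]
    simp only [← Finset.sum_add_distrib]
    refine Finset.sum_congr rfl fun a _ => Finset.sum_congr rfl fun b _ => ?_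
    rw [← N_N hF]
    generalize S.ε a = a', S.ε b = b'
    revert a' b'
    simp only [zmod_forall, sgn_zero, sgn_one, one_add_one_zmod, mul_zero, zero_mul, mul_one,
      add_zero, zero_add]
    and_intros <;> first | trivial | module
  linear_combination (norm := module) (-1/2 : ℚ) • h1 + (-1/2 : ℚ) • h2

/-- The operator `Δ_{F,R}` in terms of the Hamiltonian vector fields `K^c`. -/
theorem two_lap_curv (E : ι → ι → A) (f : A) :
    (2 : ℚ) • S.lap F (fun a b => S.curvUp E F a b) f =
      ∑ c, ∑ a, ∑ b, sgn (S.ε a + S.ε c) •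
          N S F a (E a b * (S.curv F b c * K S E c f)) := by
  have key : ∀ a, ∑ d, S.curvUp E F a d * S.D d f
      = ∑ c, ∑ b, sgn (S.ε c) • (E a b * (S.curv F b c * K S E c f)) := by
    intro a
    simp only [curvUp, Finset.smul_sum, Finset.sum_mul, K_apply, Finset.mul_sum, smul_mul_assoc,
      mul_assoc]
    rw [Finset.sum_comm]
    conv_rhs => rw [Finset.sum_comm]
    exact Finset.sum_congr rfl fun b _ => Finset.sum_comm
  rw [lap_apply, Finset.sum_comm]
  simp only [key, smul_smul, map_sum, map_smul, Finset.smul_sum, sgn_add]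
  refine Finset.sum_congr rfl fun a _ => Finset.sum_congr rfl fun c _ =>
    Finset.sum_congr rfl fun b _ => ?_
  congr 1
  ring

end

/-! ### Reduction to first order along the Hamiltonian vector fields -/

section

variable {ι : Type} [Fintype ι] [DecidableEq ι] {A : Type} [Ring A] [Algebra ℚ A]
  {S : SuperAlg ι A} {E Einv : ι → ι → A} {F : ι → A}

/-- Two double sums agree if their summands agree after symmetrization in the indices. -/
theorem sum_eq_of_symm {f g : ι → ι → A} (h : ∀ a b, f a b + f b a = g a b + g b a) :
    ∑ a, ∑ b, f a b = ∑ a, ∑ b, g a b := by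
  have hf := Finset.sum_comm (s := Finset.univ) (t := Finset.univ) (f := f)
  have hg := Finset.sum_comm (s := Finset.univ) (t := Finset.univ) (f := g)
  have h' : ∑ a, ∑ b, (f a b + f b a) = ∑ a, ∑ b, (g a b + g b a) := by simp only [h]
  simp only [Finset.sum_add_distrib] at h'
  linear_combination (norm := module) (1/2 : ℚ) • h' + (1/2 : ℚ) • hf - (1/2 : ℚ) • hg

theorem DE_sk (hE : S.AntiSymp E Einv) (c a b : ι) :
    S.D c (E a b) = sgn (S.ε a * S.ε b + S.ε a + S.ε b) • S.D c (E b a) := by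
  rw [E_sk hE a b, map_smul]

/-- The terms containing `∂_c E^{ab}`, for `f` in place of `K^c f`: the first derivatives of `f`
cancel, and a zeroth-order and a pure second-order term remain. -/
theorem second_order (hE : S.AntiSymp E Einv) (hF : ∀ a, F a ∈ S.hom (S.ε a)) (c : ι) (f : A) :
    (1/2 : ℚ) • ∑ a, ∑ b, sgn (S.ε a + S.ε a * S.ε b + S.ε c * S.ε a + S.ε c * S.ε b) •
            N S F a (N S F b (S.D c (E a b) * f))
      - ∑ a, ∑ b, sgn (S.ε a + S.ε a * S.ε c) • N S F a (S.D c (E a b) * S.D b f)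
    = (1/2 : ℚ) • (∑ a, ∑ b, sgn (S.ε a + S.ε a * S.ε b + S.ε c * S.ε a + S.ε c * S.ε b) •
          (S.D a (S.D b (S.D c (E a b))) + F a * S.D b (S.D c (E a b))
            + S.D a (F b * S.D c (E a b)) + F a * (F b * S.D c (E a b)))) * f
      - (1/2 : ℚ) • ∑ a, ∑ b, sgn (S.ε a + S.ε a * S.ε b) •
          (S.D c (E a b) * S.D a (S.D b f)) := by
  simp only [Finset.smul_sum, Finset.sum_mul, ← Finset.sum_sub_distrib]
  refine sum_eq_of_symm fun a b => ?_
  rw [DE_sk hE c b a]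
  simp only [N_apply, map_add, map_smul, mul_add, add_mul, mul_smul_comm, smul_mul_assoc, mul_assoc,
    S.D_leibniz b _ (DE_mem hE c a b), S.D_leibniz a _ (DE_mem hE c a b),
    S.D_leibniz b _ (DDE_mem hE a c a b), S.D_leibniz a _ (DDE_mem hE b c a b),
    S.D_leibniz b _ (hF a), S.D_leibniz a _ (hF b), S.D_comm b a,
    S.D_leibniz a _ (S.mul_mem (hF b) (DE_mem hE c a b)),
    S.D_leibniz b _ (S.mul_mem (hF a) (DE_mem hE c a b)), smul_add]
  generalize S.ε a = a', S.ε b = b', S.ε c = c'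
  revert a' b' c'
  simp only [zmod_forall, sgn_zero, sgn_one, one_add_one_zmod, mul_zero, zero_mul, mul_one,
    add_zero, zero_add]
  and_intros <;> first | trivial | module

/-- The terms containing `∂_b F_c` or the curvature. After subtraction of `Δ_{F,R}` only
terms proportional to `K^c f` are left: `Δ_{F,R}` contains the combination `∂_b F_c ∓ ∂_c F_b`, and
the second-order remainder `∂_c F_b · K^b K^c f` combines with the curvature term of `N_N_K_K`
into a graded commutator `[K^b, K^c]`. -/
theorem curvature_part (hE : S.AntiSymp E Einv) (hF : ∀ a, F a ∈ S.hom (S.ε a))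
    (hJ : S.JacobiId E) (f : A) :
    ∑ c, ∑ a, ∑ b, sgn (S.ε a + S.ε c) • N S F a (E a b * (S.D b (F c) * K S E c f))
      - ∑ c, ∑ a, ∑ b, sgn (S.ε a + S.ε c) • N S F a (E a b * (S.curv F b c * K S E c f))
      - (1/2 : ℚ) • ∑ a, ∑ b, sgn (S.ε b) • (S.curv F a b * K S E b (K S E a f))
    = ∑ c, (∑ a, ∑ b, (sgn (S.ε a + S.ε c + S.ε b * S.ε c) •
          (S.D a (E a b * S.D c (F b)) + F a * (E a b * S.D c (F b)))
        + (1/2 : ℚ) • sgn (S.ε b + S.ε c * S.ε a + S.ε c * S.ε b) •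
          (S.D a (F b) * S.D c (E b a)))) * K S E c f := by
  -- Subtraction of the curvature leaves `∂_c F_b`, which the Leibniz rule splits off.
  have h1 : ∑ c, ∑ a, ∑ b, sgn (S.ε a + S.ε c) • N S F a (E a b * (S.D b (F c) * K S E c f))
      - ∑ c, ∑ a, ∑ b, sgn (S.ε a + S.ε c) • N S F a (E a b * (S.curv F b c * K S E c f))
      = ∑ c, ∑ a, ∑ b, sgn (S.ε a + S.ε c + S.ε b * S.ε c) •
          (S.D a (E a b * S.D c (F b)) + F a * (E a b * S.D c (F b))) * K S E c f
        + ∑ c, ∑ a, ∑ b, sgn (S.ε b) • (S.D c (F b) * (E b a * S.D a (K S E c f))) := by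
    simp only [← Finset.sum_sub_distrib, ← Finset.sum_add_distrib]
    refine Finset.sum_congr rfl fun c _ => Finset.sum_congr rfl fun a _ =>
      Finset.sum_congr rfl fun b _ => ?_
    have h := S.D_leibniz a (K S E c f) (S.mul_mem (hE.E_mem a b) (S.D_mem c (hF b)))
    rw [E_sk hE b a, smul_mul_assoc _ (E a b), mul_smul_comm, mul_lcomm (S.D_mem c (hF b)) (hE.E_mem a b)]
    simp only [curv, sub_mul, mul_sub, N_apply, map_add, map_sub, smul_mul_assoc, mul_smul_comm,
      map_smul, add_mul, mul_add, mul_assoc] at h ⊢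
    rw [h]
    generalize S.ε a = a', S.ε b = b', S.ε c = c'
    revert a' b' c'
    simp only [zmod_forall, sgn_zero, sgn_one, one_add_one_zmod, mul_zero, zero_mul, mul_one,
      add_zero, zero_add]
    and_intros <;> first | trivial | module
  have h2 : ∑ c, ∑ a, ∑ b, sgn (S.ε b) • (S.D c (F b) * (E b a * S.D a (K S E c f)))
      = ∑ a, ∑ b, sgn (S.ε b) • (S.D a (F b) * K S E b (K S E a f)) := by
    refine Finset.sum_congr rfl fun c _ => ?_
    rw [Finset.sum_comm]
    simp only [K_apply E _ (K S E _ f), Finset.mul_sum, Finset.smul_sum]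
  -- Only the graded antisymmetric part of `∂_a F_b` survives the subtraction, and it is paired
  -- with a graded commutator of Hamiltonian vector fields.
  have h3 : ∑ a, ∑ b, sgn (S.ε b) • (S.D a (F b) * K S E b (K S E a f))
      - (1/2 : ℚ) • ∑ a, ∑ b, sgn (S.ε b) • (S.curv F a b * K S E b (K S E a f))
      = (1/2 : ℚ) • ∑ a, ∑ b, sgn (S.ε b) • (S.D a (F b) * ∑ c, sgn (S.ε c * (S.ε b + S.ε a)) •
        (S.D c (E b a) * K S E c f)) := by
    simp only [← K_K hE hJ, Finset.smul_sum, ← Finset.sum_sub_distrib]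
    refine sum_eq_of_symm fun a b => ?_
    simp only [curv, mul_add, mul_smul_comm, sub_mul, smul_mul_assoc]
    generalize S.ε a = a', S.ε b = b'
    revert a' b'
    simp only [zmod_forall, sgn_zero, sgn_one, one_add_one_zmod, mul_zero, zero_mul, mul_one,
      add_zero, zero_add]
    and_intros <;> first | trivial | module
  have h4 : ∑ c, (∑ a, ∑ b, ((1/2 : ℚ) • sgn (S.ε b + S.ε c * S.ε a + S.ε c * S.ε b) •
          (S.D a (F b) * S.D c (E b a)))) * K S E c f
      = (1/2 : ℚ) • ∑ a, ∑ b, sgn (S.ε b) • (S.D a (F b) * ∑ c, sgn (S.ε c * (S.ε b + S.ε a)) •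
        (S.D c (E b a) * K S E c f)) := by
    simp only [Finset.sum_mul, Finset.mul_sum, Finset.smul_sum, mul_smul_comm, smul_mul_assoc,
      mul_assoc]
    rw [Finset.sum_comm]
    refine Finset.sum_congr rfl fun a _ => ?_
    rw [Finset.sum_comm]
    refine Finset.sum_congr rfl fun b _ => Finset.sum_congr rfl fun c _ => ?_
    rw [smul_smul (sgn _) (sgn _), ← sgn_add]
    ring_nf
  simp only [Finset.sum_add_distrib, add_mul]
  rw [h4, h1, h2, ← h3]
  simp only [Finset.sum_mul]
  module

/-- The total coefficient of `K^c f` collected from `second_order` and `curvature_part` is the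
derivative of `4 ν_F^{(0)} + ν^{(1)}/2`. -/
theorem coefficient (hE : S.AntiSymp E Einv) (hF : ∀ a, F a ∈ S.hom (S.ε a)) (c : ι) :
    (1/2 : ℚ) • (∑ a, ∑ b, sgn (S.ε a + S.ε a * S.ε b + S.ε c * S.ε a + S.ε c * S.ε b) •
          (S.D a (S.D b (S.D c (E a b))) + F a * S.D b (S.D c (E a b))
            + S.D a (F b * S.D c (E a b)) + F a * (F b * S.D c (E a b))))
      + ∑ a, ∑ b, (sgn (S.ε a + S.ε c + S.ε b * S.ε c) •
          (S.D a (E a b * S.D c (F b)) + F a * (E a b * S.D c (F b)))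
        + (1/2 : ℚ) • sgn (S.ε b + S.ε c * S.ε a + S.ε c * S.ε b) •
          (S.D a (F b) * S.D c (E b a)))
    = (4 : ℚ) • S.D c (S.nuF0 E F) + (1/2 : ℚ) • S.D c (S.nu1 E) := by
  rw [nuF0, nu1, map_smul, smul_smul]
  simp only [map_sum, map_smul, Finset.smul_sum, ← Finset.sum_add_distrib]
  refine sum_eq_of_symm fun a b => ?_
  rw [E_sk hE b a]
  simp only [map_add, map_smul, mul_add, add_mul, mul_smul_comm, smul_mul_assoc, mul_assoc,
    S.D_leibniz b _ (DE_mem hE c a b), S.D_leibniz a _ (DE_mem hE c a b),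
    S.D_leibniz b _ (hE.E_mem a b), S.D_leibniz a _ (hE.E_mem a b), S.D_leibniz c _ (hE.E_mem a b),
    S.D_leibniz b _ (DE_mem hE a a b), S.D_leibniz a _ (DE_mem hE b a b),
    S.D_leibniz c _ (DE_mem hE a a b), S.D_leibniz c _ (DE_mem hE b a b),
    S.D_leibniz b _ (hF a), S.D_leibniz a _ (hF b),
    S.D_leibniz c _ (hF b), S.D_leibniz c _ (hF a), smul_add, S.D_comm b a, S.D_comm a c,
    S.D_comm b c, mul_lcomm (hF a) (hE.E_mem a b), mul_lcomm (hF b) (hE.E_mem a b),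
    mul_lcomm (S.D_mem c (hF a)) (hE.E_mem a b), mul_lcomm (S.D_mem c (hF b)) (hE.E_mem a b),
    S.supercomm (hF a) (DE_mem hE c a b), S.supercomm (hF b) (DE_mem hE c a b),
    S.supercomm (hF a) (S.D_mem c (DE_mem hE a a b)),
    S.supercomm (hF a) (S.D_mem c (DE_mem hE b a b)),
    S.supercomm (hF b) (S.D_mem c (DE_mem hE a a b)),
    S.supercomm (hF b) (S.D_mem c (DE_mem hE b a b)),
    S.supercomm (S.D_mem a (hF b)) (DE_mem hE c a b),
    S.supercomm (S.D_mem b (hF a)) (DE_mem hE c a b),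
    mul_lcomm (hF a) (DE_mem hE c a b), mul_lcomm (hF b) (DE_mem hE c a b),
    S.supercomm (hF b) (hF a), S.supercomm (S.D_mem c (hF a)) (hF b),
    S.supercomm (S.D_mem c (hF b)) (hF a)]
  generalize S.ε a = a', S.ε b = b', S.ε c = c'
  revert a' b' c'
  simp only [zmod_forall, sgn_zero, sgn_one, one_add_one_zmod, mul_zero, zero_mul, mul_one,
    add_zero, zero_add]
  and_intros <;> first | trivial | module

end

/-! ### The residual vector field -/

section

variable {ι : Type} [Fintype ι] [DecidableEq ι] {A : Type} [Ring A] [Algebra ℚ A]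
  {S : SuperAlg ι A} {E Einv : ι → ι → A} {F : ι → A}

/-- A triple sum vanishes if the cyclic sums of its summand vanish. -/
theorem sum_cyclic_zero {f : ι → ι → ι → A} (h : ∀ a b c, f a b c + f b c a + f c a b = 0) :
    ∑ a, ∑ b, ∑ c, f a b c = 0 := by
  have h1 : ∑ a, ∑ b, ∑ c, f b c a = ∑ a, ∑ b, ∑ c, f a b c := by
    rw [Finset.sum_comm]
    exact Finset.sum_congr rfl fun b _ => Finset.sum_comm
  have h2 : ∑ a, ∑ b, ∑ c, f c a b = ∑ a, ∑ b, ∑ c, f a b c := by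
    exact (Finset.sum_congr rfl fun a _ => Finset.sum_comm).trans Finset.sum_comm
  have h' : ∑ a, ∑ b, ∑ c, (f a b c + f b c a + f c a b) = 0 := by simp only [h]; simp
  simp only [Finset.sum_add_distrib] at h'
  linear_combination (norm := module) (1/3 : ℚ) • h' - (1/3 : ℚ) • h1 - (1/3 : ℚ) • h2

/-- A fourfold sum vanishes if its summand is odd under exchange of the first pair of
indices with the second pair. -/
theorem sum_pair_swap_zero {f : ι → ι → ι → ι → A} (h : ∀ a b c d, f a b c d + f c d a b = 0) :
    ∑ a, ∑ b, ∑ c, ∑ d, f a b c d = 0 := by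
  have h1 : ∑ a, ∑ b, ∑ c, ∑ d, f c d a b = ∑ a, ∑ b, ∑ c, ∑ d, f a b c d := by
    have h2 := Finset.sum_comm (s := (Finset.univ : Finset (ι × ι)))
      (t := (Finset.univ : Finset (ι × ι))) (f := fun x y => f y.1 y.2 x.1 x.2)
    simpa only [Fintype.sum_prod_type] using h2
  have h' : ∑ a, ∑ b, ∑ c, ∑ d, (f a b c d + f c d a b) = 0 := by simp only [h]; simp
  simp only [Finset.sum_add_distrib] at h'
  linear_combination (norm := module) (1/2 : ℚ) • h' - (1/2 : ℚ) • h1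

/-- A fourfold sum vanishes if its summand is odd under the simultaneous exchange of the indices
within the first pair and within the second pair. -/
theorem sum_inner_swap_zero {f : ι → ι → ι → ι → A} (h : ∀ a b c d, f a b c d + f b a d c = 0) :
    ∑ a, ∑ b, ∑ c, ∑ d, f a b c d = 0 := by
  have h1 : ∑ a, ∑ b, ∑ c, ∑ d, f b a d c = ∑ a, ∑ b, ∑ c, ∑ d, f a b c d := by
    rw [Finset.sum_comm]
    exact Finset.sum_congr rfl fun b _ => Finset.sum_congr rfl fun a _ => Finset.sum_comm
  have h' : ∑ a, ∑ b, ∑ c, ∑ d, (f a b c d + f b a d c) = 0 := by simp only [h]; simp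
  simp only [Finset.sum_add_distrib] at h'
  linear_combination (norm := module) (1/2 : ℚ) • h' - (1/2 : ℚ) • h1

/-- The components `Q^d` of the odd vector field that remains of the second-order part:
`Q^d = (-1)^{ε_a (ε_b + 1)} (∂_c E^{ab}) (∂_a ∂_b E^{cd})`. -/
def Q (S : SuperAlg ι A) (E : ι → ι → A) (d : ι) : A :=
  ∑ c, ∑ a, ∑ b, sgn (S.ε a + S.ε a * S.ε b) • (S.D c (E a b) * S.D a (S.D b (E c d)))

/-- The pure second-order term of `second_order`, evaluated on `K^c f`, is a vector field: the
third derivatives of `f` cancel by the Jacobi identity and the second derivatives by symmetry. -/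
theorem second_order_residue (hE : S.AntiSymp E Einv) (hJ : S.JacobiId E) (f : A) :
    ∑ c, ∑ a, ∑ b, sgn (S.ε a + S.ε a * S.ε b) •
        (S.D c (E a b) * S.D a (S.D b (K S E c f))) = ∑ d, Q S E d * S.D d f := by
  -- `h3`, `h1`, `h2` are the parts with three and with two derivatives of `f`.
  have h3 : ∑ c, ∑ a, ∑ b, ∑ d,
      sgn (S.ε a + S.ε a * S.ε b + (S.ε a + S.ε b) * (S.ε c + S.ε d + 1)) •
        (S.D c (E a b) * (E c d * S.D a (S.D b (S.D d f)))) = 0 := by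
    have h : ∑ c, ∑ a, ∑ b, ∑ d,
      sgn (S.ε a + S.ε a * S.ε b + (S.ε a + S.ε b) * (S.ε c + S.ε d + 1)) •
        (S.D c (E a b) * (E c d * S.D a (S.D b (S.D d f)))) =
        - ∑ a, ∑ b, ∑ d, sgn (S.ε a + S.ε a * S.ε b) •
          (K S E d (E a b) * S.D a (S.D b (S.D d f))) := by
      rw [Finset.sum_comm, ← Finset.sum_neg_distrib]
      refine Finset.sum_congr rfl fun a _ => ?_
      rw [Finset.sum_comm, ← Finset.sum_neg_distrib]
      refine Finset.sum_congr rfl fun b _ => ?_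
      rw [Finset.sum_comm, ← Finset.sum_neg_distrib]
      refine Finset.sum_congr rfl fun d _ => ?_
      rw [K_apply, Finset.sum_mul, Finset.smul_sum, ← Finset.sum_neg_distrib]
      refine Finset.sum_congr rfl fun c _ => ?_
      rw [mul_lcomm (DE_mem hE c a b) (hE.E_mem c d), E_sk hE c d]
      simp only [smul_mul_assoc, mul_assoc]
      generalize S.ε a = a', S.ε b = b', S.ε c = c', S.ε d = d'
      revert a' b' c' d'
      simp only [zmod_forall, sgn_zero, sgn_one, one_add_one_zmod, mul_zero, zero_mul, mul_one,
        add_zero, zero_add]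
      and_intros <;> first | trivial | module
    rw [h, neg_eq_zero]
    refine sum_cyclic_zero fun a b d => ?_
    have hj := congrArg (· * S.D a (S.D b (S.D d f))) (eJacobi hJ a b d)
    simp only [add_mul, smul_mul_assoc, zero_mul] at hj
    rw [S.D_comm d a (S.D b f), S.D_comm d b f, S.D_comm d a f]
    simp only [map_smul, S.D_comm b a (S.D d f), mul_smul_comm]
    revert hj
    generalize S.ε a = a', S.ε b = b', S.ε d = d'
    revert a' b' d'
    simp only [one_mul, zmod_forall, sgn_zero, sgn_one, one_add_one_zmod, mul_zero, zero_mul, mul_one,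
      add_zero, zero_add]
    and_intros <;> intro h <;>
      first
      | linear_combination (norm := module) (1 : ℚ) • h
      | linear_combination (norm := module) (-1 : ℚ) • h
  have h1 : ∑ c, ∑ a, ∑ b, ∑ d,
      sgn (S.ε a + S.ε a * S.ε b + S.ε a * (S.ε b + S.ε c + S.ε d + 1)) •
        (S.D c (E a b) * (S.D b (E c d) * S.D a (S.D d f))) = 0 := by
    refine sum_pair_swap_zero fun c a b d => ?_
    rw [mul_lcomm (DE_mem hE b d c) (DE_mem hE c b a), DE_sk hE b d c, DE_sk hE c b a,
      S.D_comm d a]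
    simp only [mul_smul_comm, smul_mul_assoc]
    generalize S.ε a = a', S.ε b = b', S.ε c = c', S.ε d = d'
    revert a' b' c' d'
    simp only [zmod_forall, sgn_zero, sgn_one, one_add_one_zmod, mul_zero, zero_mul, mul_one,
      add_zero, zero_add]
    and_intros <;> first | trivial | module
  have h2 : ∑ c, ∑ a, ∑ b, ∑ d,
      sgn (S.ε a + S.ε a * S.ε b + S.ε b * (S.ε c + S.ε d + 1)) •
        (S.D c (E a b) * (S.D a (E c d) * S.D b (S.D d f))) = 0 := by
    refine sum_inner_swap_zero fun c a b d => ?_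
    rw [mul_lcomm (DE_mem hE a c d) (DE_mem hE c a b), S.D_comm d b]
    simp only [mul_smul_comm, smul_mul_assoc]
    generalize S.ε a = a', S.ε b = b', S.ε c = c', S.ε d = d'
    revert a' b' c' d'
    simp only [zmod_forall, sgn_zero, sgn_one, one_add_one_zmod, mul_zero, zero_mul, mul_one,
      add_zero, zero_add]
    and_intros <;> first | trivial | module
  have h0 : ∑ d, Q S E d * S.D d f = ∑ c, ∑ a, ∑ b, ∑ d, sgn (S.ε a + S.ε a * S.ε b) •
      (S.D c (E a b) * (S.D a (S.D b (E c d)) * S.D d f)) := by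
    simp only [Q, Finset.sum_mul, smul_mul_assoc, mul_assoc]
    rw [Finset.sum_comm]
    refine Finset.sum_congr rfl fun c _ => ?_
    rw [Finset.sum_comm]
    refine Finset.sum_congr rfl fun a _ => Finset.sum_comm
  rw [h0, ← add_zero (∑ c, ∑ a, ∑ b, ∑ d, sgn (S.ε a + S.ε a * S.ε b) • _), ← h1,
    ← add_zero (_ + _), ← h2, ← add_zero (_ + _), ← h3]
  simp only [← Finset.sum_add_distrib]
  refine Finset.sum_congr rfl fun c _ => Finset.sum_congr rfl fun a _ =>
      Finset.sum_congr rfl fun b _ => ?_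
  simp only [K_apply, map_sum, Finset.mul_sum, Finset.smul_sum]
  refine Finset.sum_congr rfl fun d _ => ?_
  simp only [S.D_leibniz b _ (hE.E_mem c d), map_add, map_smul, S.D_leibniz a _ (hE.E_mem c d),
    S.D_leibniz a _ (DE_mem hE b c d), mul_add, mul_smul_comm]
  generalize S.ε a = a', S.ε b = b', S.ε c = c', S.ε d = d'
  revert a' b' c' d'
  simp only [zmod_forall, sgn_zero, sgn_one, one_add_one_zmod, mul_zero, zero_mul, mul_one,
    add_zero, zero_add]
  and_intros <;> first | trivial | module

end

/-! ### Hamiltonian vector fields acting on `E` and its inverse -/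

section

variable {ι : Type} [Fintype ι] [DecidableEq ι] {A : Type} [Ring A] [Algebra ℚ A]
  {S : SuperAlg ι A} {E Einv : ι → ι → A} {F : ι → A}

theorem Einv_sk (hE : S.AntiSymp E Einv) (a b : ι) :
    Einv a b = sgn (S.ε a * S.ε b + 1) • Einv b a := by
  rw [hE.Einv_skew a b, sgn_add, sgn_one]
  module

theorem K_mem (hE : S.AntiSymp E Einv) (m : ι) {p : ZMod 2} {f : A} (hf : f ∈ S.hom p) :
    K S E m f ∈ S.hom (p + S.ε m + 1) := by
  rw [K_apply]
  refine Submodule.sum_mem _ fun b _ => ?_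
  have h := S.mul_mem (hE.E_mem m b) (S.D_mem b hf)
  convert h using 2
  clear h hf
  generalize S.ε m = m', S.ε b = b'
  revert m' b' p
  decide

theorem K_leibniz (hE : S.AntiSymp E Einv) (m : ι) {p : ZMod 2} {f : A} (g : A)
    (hf : f ∈ S.hom p) :
    K S E m (f * g) = K S E m f * g + sgn ((S.ε m + 1) * p) • (f * K S E m g) := by
  simp only [K_apply, Finset.sum_mul, Finset.mul_sum, Finset.smul_sum, ← Finset.sum_add_distrib]
  refine Finset.sum_congr rfl fun b _ => ?_
  rw [S.D_leibniz b _ hf, mul_lcomm hf (hE.E_mem m b)]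
  simp only [mul_add, mul_smul_comm, mul_assoc]
  clear hf
  generalize S.ε m = m', S.ε b = b'
  revert m' b' p
  simp only [zmod_forall, sgn_zero, sgn_one, one_add_one_zmod, mul_zero, zero_mul, mul_one,
    add_zero, zero_add]
  and_intros <;> first | trivial | module

theorem Einv_E_mul (hE : S.AntiSymp E Einv) (x : ι) (g : ι → A) :
    ∑ a, Einv x a * ∑ c, E a c * g c = g x := by
  simp only [Finset.mul_sum, ← mul_assoc]
  rw [Finset.sum_comm]
  simp only [← Finset.sum_mul, hE.inv_mul]
  simp

/-- Contraction with the inverse matrix recovers `∂_x` from the `K^a`. -/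
theorem Einv_K (hE : S.AntiSymp E Einv) (x : ι) (f : A) :
    ∑ a, Einv x a * K S E a f = S.D x f := by
  simp only [K_apply, Einv_E_mul hE x fun c => S.D c f]

/-- The component Jacobi identity, solved for its first term. -/
theorem K_E (hJ : S.JacobiId E) (m a b : ι) :
    K S E m (E a b) = - sgn ((S.ε m + 1) * (S.ε a + S.ε b)) • K S E a (E b m)
      - sgn ((S.ε b + 1) * (S.ε a + S.ε m)) • K S E b (E m a) := by
  have h := eJacobi hJ m a b
  revert h
  generalize S.ε a = a', S.ε b = b', S.ε m = m'
  revert a' b' m'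
  simp only [zmod_forall, sgn_zero, sgn_one, one_add_one_zmod, mul_zero, zero_mul, mul_one,
    add_zero, zero_add]
  and_intros <;> intro h <;>
    first
    | linear_combination (norm := module) (1 : ℚ) • h
    | linear_combination (norm := module) (-1 : ℚ) • h

theorem K_D (hE : S.AntiSymp E Einv) (m d : ι) (f : A) :
    K S E m (S.D d f) = sgn ((S.ε m + 1) * S.ε d) •
      (S.D d (K S E m f) - ∑ e, S.D d (E m e) * S.D e f) := by
  have h := K_N hE (F := fun _ => 0) (fun a => Submodule.zero_mem _) m d f
  simpa [N_apply] using h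

/-- The derivative of `K_E`: both sides are commuted past `∂_d`, and every commutator produces
a product of two first derivatives of `E`. -/
theorem K_DE (hE : S.AntiSymp E Einv) (hJ : S.JacobiId E) (m d a b : ι) :
    K S E m (S.D d (E a b)) =
      - sgn ((S.ε m + 1) * S.ε d) • ∑ e, S.D d (E m e) * S.D e (E a b)
      - sgn ((S.ε m + 1) * (S.ε d + S.ε a + S.ε b)) • ∑ e, S.D d (E a e) * S.D e (E b m)
      - sgn ((S.ε m + 1) * S.ε d + (S.ε b + 1) * (S.ε a + S.ε m)) •
          ∑ e, S.D d (E b e) * S.D e (E m a)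
      - sgn ((S.ε m + 1) * (S.ε d + S.ε a + S.ε b) + (S.ε a + 1) * S.ε d) •
          K S E a (S.D d (E b m))
      - sgn ((S.ε m + 1) * S.ε d + (S.ε b + 1) * (S.ε a + S.ε m) + (S.ε b + 1) * S.ε d) •
          K S E b (S.D d (E m a)) := by
  rw [K_D hE m d, K_E hJ, K_D hE a d, K_D hE b d]
  simp only [map_sub, map_neg, map_smul, neg_smul]
  generalize S.ε a = a', S.ε b = b', S.ε m = m', S.ε d = d'
  revert a' b' m' d'
  simp only [zmod_forall, sgn_zero, sgn_one, one_add_one_zmod, mul_zero, zero_mul, mul_one,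
    add_zero, zero_add]
  and_intros <;> first | trivial | module

/-- The counterpart of `K_E` for the inverse matrix; in substance, closedness of the two-form
`E_{ab}`. -/
theorem K_Einv (hE : S.AntiSymp E Einv) (hJ : S.JacobiId E) (m x b : ι) :
    K S E m (Einv x b) = ∑ c, sgn ((S.ε m + 1) * (S.ε x + S.ε c + 1)) •
        (S.D x (E c m) * Einv c b)
      + ∑ a, sgn ((S.ε m + 1) * (S.ε x + S.ε a + 1) + (S.ε a + S.ε m) * S.ε b + 1) •
        (Einv x a * S.D b (E m a)) := by
  -- Differentiate `E E⁻¹ = 1` along `K^m`, then solve for the derivative of `E⁻¹`.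
  have h0 : ∀ a, ∑ c, E a c * (sgn ((S.ε m + 1) * S.ε c) • K S E m (Einv c b)) =
      - sgn ((S.ε m + 1) * (S.ε a + 1)) • ∑ c, K S E m (E a c) * Einv c b := by
    intro a
    have h := congrArg (K S E m) (hE.mul_inv a b)
    have hr : K S E m (if a = b then (1 : A) else 0) = 0 := by
      split_ifs
      · simp [K_apply, D_one]
      · simp
    rw [hr, map_sum] at h
    have h2 : ∑ c, E a c * (sgn ((S.ε m + 1) * S.ε c) • K S E m (Einv c b)) +
        sgn ((S.ε m + 1) * (S.ε a + 1)) • ∑ c, K S E m (E a c) * Einv c b =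
        sgn ((S.ε m + 1) * (S.ε a + 1)) • ∑ c, K S E m (E a c * Einv c b) := by
      simp only [Finset.smul_sum, ← Finset.sum_add_distrib]
      refine Finset.sum_congr rfl fun c _ => ?_
      rw [K_leibniz hE m _ (hE.E_mem a c), mul_smul_comm]
      generalize S.ε a = a', S.ε c = c', S.ε m = m'
      revert a' c' m'
      simp only [zmod_forall, sgn_zero, sgn_one, one_add_one_zmod, mul_zero, zero_mul, mul_one,
        add_zero, zero_add]
      and_intros <;> first | trivial | module
    rw [h, smul_zero] at h2
    linear_combination (norm := module) (1 : ℚ) • h2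
  have h1 := Einv_E_mul hE x fun c => sgn ((S.ε m + 1) * S.ε c) • K S E m (Einv c b)
  simp only [h0] at h1
  have h2 : ∑ c, sgn ((S.ε m + 1) * (S.ε c + 1)) • (S.D x (E c m) * Einv c b)
      = ∑ a, ∑ c, sgn ((S.ε m + 1) * (S.ε c + 1)) •
          (Einv x a * (K S E a (E c m) * Einv c b)) := by
    rw [Finset.sum_comm]
    simp only [← Einv_K hE x (E _ m), Finset.sum_mul, Finset.smul_sum, mul_assoc]
  have h3 : ∑ a, sgn ((S.ε m + 1) * (S.ε a + 1) + (S.ε a + S.ε m) * S.ε b + 1) •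
        (Einv x a * S.D b (E m a))
      = ∑ a, ∑ c, sgn ((S.ε m + 1) * (S.ε a + 1) + (S.ε c + 1) * (S.ε a + S.ε m)) •
          (Einv x a * (K S E c (E m a) * Einv c b)) := by
    refine Finset.sum_congr rfl fun a _ => ?_
    rw [← Einv_K hE b (E m a), Finset.mul_sum, Finset.smul_sum]
    refine Finset.sum_congr rfl fun c _ => ?_
    rw [S.supercomm (K_mem hE c (hE.E_mem m a)) (hE.Einv_mem c b), Einv_sk hE c b]
    simp only [mul_smul_comm, smul_mul_assoc]
    generalize S.ε a = a', S.ε b = b', S.ε c = c', S.ε m = m'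
    revert a' b' c' m'
    simp only [zmod_forall, sgn_zero, sgn_one, one_add_one_zmod, mul_zero, zero_mul, mul_one,
      add_zero, zero_add]
    and_intros <;> first | trivial | module
  have h4 : sgn ((S.ε m + 1) * S.ε x) • K S E m (Einv x b) =
      ∑ c, sgn ((S.ε m + 1) * (S.ε c + 1)) • (S.D x (E c m) * Einv c b)
      + ∑ a, sgn ((S.ε m + 1) * (S.ε a + 1) + (S.ε a + S.ε m) * S.ε b + 1) •
        (Einv x a * S.D b (E m a)) := by
    rw [← h1, h2, h3, ← Finset.sum_add_distrib]
    refine Finset.sum_congr rfl fun a _ => ?_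
    simp only [Finset.smul_sum, Finset.mul_sum, ← Finset.sum_add_distrib]
    refine Finset.sum_congr rfl fun c _ => ?_
    rw [K_E hJ m a c]
    simp only [sub_mul, mul_sub, neg_smul, neg_mul, mul_neg, smul_mul_assoc, mul_smul_comm]
    generalize S.ε a = a', S.ε c = c', S.ε m = m'
    revert a' c' m'
    simp only [zmod_forall, sgn_zero, sgn_one, one_add_one_zmod, mul_zero, zero_mul, mul_one,
      add_zero, zero_add]
    and_intros <;> first | trivial | module
  have h5 := congrArg (sgn ((S.ε m + 1) * S.ε x) • ·) h4
  simp only [smul_smul, sgn_mul_self, one_smul, smul_add, Finset.smul_sum, ← sgn_add] at h5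
  rw [h5]
  congr 1 <;> refine Finset.sum_congr rfl fun c _ => ?_ <;> congr 2 <;> ring

end

/-! ### The derivative of `ν^{(2)}` along a Hamiltonian vector field -/

section

variable {ι : Type} [Fintype ι] [DecidableEq ι] {A : Type} [Ring A] [Algebra ℚ A]
  {S : SuperAlg ι A} {E Einv : ι → ι → A} {F : ι → A}

theorem sum_reverse (f : ι → ι → ι → ι → A) :
    ∑ a, ∑ b, ∑ c, ∑ d, f d c b a = ∑ a, ∑ b, ∑ c, ∑ d, f a b c d := by
  have h := Fintype.sum_equiv
    (⟨fun x => (x.2.2.2, x.2.2.1, x.2.1, x.1), fun x => (x.2.2.2, x.2.2.1, x.2.1, x.1),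
      fun _ => rfl, fun _ => rfl⟩ : ι × ι × ι × ι ≃ ι × ι × ι × ι)
    (fun x => f x.2.2.2 x.2.2.1 x.2.1 x.1) (fun x => f x.1 x.2.1 x.2.2.1 x.2.2.2) fun _ => rfl
  simpa only [Fintype.sum_prod_type] using h

theorem sum_five_perm (f : ι → ι → ι → ι → ι → A) :
    ∑ a, ∑ b, ∑ c, ∑ d, ∑ e, f e c b a d = ∑ a, ∑ b, ∑ c, ∑ d, ∑ e, f a b c d e := by
  have h := Fintype.sum_equiv
    (⟨fun x => (x.2.2.2.2, x.2.2.1, x.2.1, x.1, x.2.2.2.1),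
      fun x => (x.2.2.2.1, x.2.2.1, x.2.1, x.2.2.2.2, x.1),
      fun _ => rfl, fun _ => rfl⟩ : ι × ι × ι × ι × ι ≃ ι × ι × ι × ι × ι)
    (fun x => f x.2.2.2.2 x.2.2.1 x.2.1 x.1 x.2.2.2.1)
    (fun x => f x.1 x.2.1 x.2.2.1 x.2.2.2.1 x.2.2.2.2) fun _ => rfl
  simpa only [Fintype.sum_prod_type] using h

theorem sum_five_swap (f : ι → ι → ι → ι → ι → A) :
    ∑ a, ∑ b, ∑ c, ∑ d, ∑ e, f a e c d b = ∑ a, ∑ b, ∑ c, ∑ d, ∑ e, f a b c d e := by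
  have h := Fintype.sum_equiv
    (⟨fun x => (x.1, x.2.2.2.2, x.2.2.1, x.2.2.2.1, x.2.1),
      fun x => (x.1, x.2.2.2.2, x.2.2.1, x.2.2.2.1, x.2.1),
      fun _ => rfl, fun _ => rfl⟩ : ι × ι × ι × ι × ι ≃ ι × ι × ι × ι × ι)
    (fun x => f x.1 x.2.2.2.2 x.2.2.1 x.2.2.2.1 x.2.1)
    (fun x => f x.1 x.2.1 x.2.2.1 x.2.2.2.1 x.2.2.2.2) fun _ => rfl
  simpa only [Fintype.sum_prod_type] using h

/-- Reordering of a product of three homogeneous factors into the opposite order. -/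
theorem mul_reverse {p q r : ZMod 2} {x y z : A} (hx : x ∈ S.hom p) (hy : y ∈ S.hom q)
    (hz : z ∈ S.hom r) :
    x * (y * z) = sgn (p * q + p * r + q * r) • (z * (y * x)) := by
  rw [mul_lcomm hx hy, S.supercomm hx hz, mul_smul_comm, mul_lcomm hy hz, smul_smul, smul_smul,
    ← sgn_add, ← sgn_add]

/-- The Leibniz rule for `ν^{(2)}`. Reversing the order of the factors shows that the two factors
`∂E` contribute equally. -/
theorem K_nu2 (hE : S.AntiSymp E Einv) (m : ι) :
    K S E m (S.nu2 E Einv) =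
      (2 : ℚ) • ∑ a, ∑ b, ∑ c, ∑ d, sgn (S.ε a * S.ε c) •
        (K S E m (S.D d (E a b)) * (Einv b c * S.D a (E c d)))
      + ∑ a, ∑ b, ∑ c, ∑ d, sgn (S.ε a * S.ε c + (S.ε m + 1) * (S.ε a + S.ε b + S.ε d + 1)) •
        (S.D d (E a b) * (K S E m (Einv b c) * S.D a (E c d))) := by
  have h : ∑ a, ∑ b, ∑ c, ∑ d, sgn (S.ε a * S.ε c) •
        (K S E m (S.D d (E a b)) * (Einv b c * S.D a (E c d)))
      = ∑ a, ∑ b, ∑ c, ∑ d, sgn (S.ε a * S.ε c + (S.ε m + 1) * (S.ε a + S.ε c + S.ε d)) •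
        (S.D d (E a b) * (Einv b c * K S E m (S.D a (E c d)))) := by
    rw [← sum_reverse]
    refine Finset.sum_congr rfl fun a _ => Finset.sum_congr rfl fun b _ =>
      Finset.sum_congr rfl fun c _ => Finset.sum_congr rfl fun d _ => ?_
    rw [mul_reverse (K_mem hE m (DE_mem hE a d c)) (hE.Einv_mem c b) (DE_mem hE d b a),
      DE_sk hE a d c, DE_sk hE d b a, Einv_sk hE c b]
    simp only [mul_smul_comm, smul_mul_assoc, map_smul]
    generalize S.ε a = a', S.ε b = b', S.ε c = c', S.ε d = d', S.ε m = m'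
    revert a' b' c' d' m'
    simp only [zmod_forall, sgn_zero, sgn_one, one_add_one_zmod, mul_zero, zero_mul, mul_one,
      add_zero, zero_add]
    and_intros <;> first | trivial | module
  have h2 : K S E m (S.nu2 E Einv) =
      ∑ a, ∑ b, ∑ c, ∑ d, sgn (S.ε a * S.ε c) •
        (K S E m (S.D d (E a b)) * (Einv b c * S.D a (E c d)))
      + ∑ a, ∑ b, ∑ c, ∑ d, sgn (S.ε a * S.ε c + (S.ε m + 1) * (S.ε a + S.ε b + S.ε d + 1)) •
        (S.D d (E a b) * (K S E m (Einv b c) * S.D a (E c d)))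
      + ∑ a, ∑ b, ∑ c, ∑ d, sgn (S.ε a * S.ε c + (S.ε m + 1) * (S.ε a + S.ε c + S.ε d)) •
        (S.D d (E a b) * (Einv b c * K S E m (S.D a (E c d)))) := by
    simp only [nu2, map_sum, ← Finset.sum_add_distrib]
    refine Finset.sum_congr rfl fun a _ => Finset.sum_congr rfl fun b _ =>
      Finset.sum_congr rfl fun c _ => Finset.sum_congr rfl fun d _ => ?_
    rw [map_smul, K_leibniz hE m _ (DE_mem hE d a b), K_leibniz hE m _ (hE.Einv_mem b c)]
    simp only [mul_add, mul_smul_comm, smul_mul_assoc]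
    generalize S.ε a = a', S.ε b = b', S.ε c = c', S.ε d = d', S.ε m = m'
    revert a' b' c' d' m'
    simp only [zmod_forall, sgn_zero, sgn_one, one_add_one_zmod, mul_zero, zero_mul, mul_one,
      add_zero, zero_add]
    and_intros <;> first | trivial | module
  linear_combination (norm := module) (1 : ℚ) • h2 - (1 : ℚ) • h

/-- The contribution of the derivative of `E_{bc}`: the two terms of `K_Einv` contribute equally,
again by reversal of the factors. The result cancels one of the terms of `nu2_split`. -/
theorem nu2_Einv_part (hE : S.AntiSymp E Einv) (hJ : S.JacobiId E) (m : ι) :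
    ∑ a, ∑ b, ∑ c, ∑ d, sgn (S.ε a * S.ε c + (S.ε m + 1) * (S.ε a + S.ε b + S.ε d + 1)) •
        (S.D d (E a b) * (K S E m (Einv b c) * S.D a (E c d)))
    = (2 : ℚ) • ∑ a, ∑ b, ∑ c, ∑ d, ∑ e,
        sgn (S.ε a * S.ε c + (S.ε m + 1) * (S.ε d + S.ε a + S.ε b)) •
        (S.D d (E a e) * S.D e (E b m) * (Einv b c * S.D a (E c d))) := by
  have h1 : ∑ a, ∑ b, ∑ c, ∑ d, ∑ e,
        sgn (S.ε a * S.ε c + (S.ε m + 1) * (S.ε d + S.ε a + S.ε b)) •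
        (S.D d (E a e) * S.D e (E b m) * (Einv b c * S.D a (E c d)))
      = ∑ a, ∑ b, ∑ c, ∑ d, sgn (S.ε a * S.ε c + (S.ε m + 1) * (S.ε a + S.ε b + S.ε d + 1)) •
        (S.D d (E a b) * ((∑ e, sgn ((S.ε m + 1) * (S.ε b + S.ε e + 1)) •
        (S.D b (E e m) * Einv e c)) * S.D a (E c d))) := by
    rw [← sum_five_swap]
    refine Finset.sum_congr rfl fun a _ => Finset.sum_congr rfl fun b _ =>
      Finset.sum_congr rfl fun c _ => Finset.sum_congr rfl fun d _ => ?_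
    rw [Finset.sum_mul, Finset.mul_sum, Finset.smul_sum]
    refine Finset.sum_congr rfl fun e _ => ?_
    simp only [mul_smul_comm, smul_mul_assoc, mul_assoc]
    generalize S.ε a = a', S.ε b = b', S.ε c = c', S.ε d = d', S.ε m = m', S.ε e = e'
    revert a' b' c' d' m' e'
    simp only [zmod_forall, sgn_zero, sgn_one, one_add_one_zmod, mul_zero, zero_mul, mul_one,
      add_zero, zero_add]
    and_intros <;> first | trivial | module
  have h2 : ∑ a, ∑ b, ∑ c, ∑ d, sgn (S.ε a * S.ε c + (S.ε m + 1) * (S.ε a + S.ε b + S.ε d + 1)) •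
        (S.D d (E a b) * ((∑ e, sgn ((S.ε m + 1) * (S.ε b + S.ε e + 1)) •
        (S.D b (E e m) * Einv e c)) * S.D a (E c d)))
      = ∑ a, ∑ b, ∑ c, ∑ d, sgn (S.ε a * S.ε c + (S.ε m + 1) * (S.ε a + S.ε b + S.ε d + 1)) •
        (S.D d (E a b) * ((∑ e, sgn ((S.ε m + 1) * (S.ε b + S.ε e + 1) +
          (S.ε e + S.ε m) * S.ε c + 1) • (Einv b e * S.D c (E m e))) * S.D a (E c d))) := by
    rw [← sum_reverse]
    refine Finset.sum_congr rfl fun a _ => Finset.sum_congr rfl fun b _ =>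
      Finset.sum_congr rfl fun c _ => Finset.sum_congr rfl fun d _ => ?_
    simp only [Finset.sum_mul, Finset.mul_sum, Finset.smul_sum]
    refine Finset.sum_congr rfl fun e _ => ?_
    rw [smul_mul_assoc, mul_smul_comm, mul_reverse (DE_mem hE a d c)
      (S.mul_mem (DE_mem hE c e m) (hE.Einv_mem e b)) (DE_mem hE d b a),
      S.supercomm (DE_mem hE c e m) (hE.Einv_mem e b), DE_sk hE a d c, DE_sk hE d b a,
      DE_sk hE c e m, Einv_sk hE e b]
    simp only [mul_smul_comm, smul_mul_assoc]
    generalize S.ε a = a', S.ε b = b', S.ε c = c', S.ε d = d', S.ε m = m', S.ε e = e'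
    revert a' b' c' d' m' e'
    simp only [zmod_forall, sgn_zero, sgn_one, one_add_one_zmod, mul_zero, zero_mul, mul_one,
      add_zero, zero_add]
    and_intros <;> first | trivial | module
  have h3 : ∀ b c, K S E m (Einv b c) = (∑ e, sgn ((S.ε m + 1) * (S.ε b + S.ε e + 1)) •
        (S.D b (E e m) * Einv e c)) + ∑ e, sgn ((S.ε m + 1) * (S.ε b + S.ε e + 1) +
          (S.ε e + S.ε m) * S.ε c + 1) • (Einv b e * S.D c (E m e)) :=
    fun b c => K_Einv hE hJ m b c
  simp only [h3, add_mul (∑ e, _) (∑ e, _), mul_add (S.D _ _), smul_add, Finset.sum_add_distrib]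
  rw [← h2, ← h1, two_smul]

end

section

variable {ι : Type} [Fintype ι] [DecidableEq ι] {A : Type} [Ring A] [Algebra ℚ A]
  {S : SuperAlg ι A} {E Einv : ι → ι → A} {F : ι → A}

/-- The contribution of one factor `∂E`, expanded by `K_DE` into three terms cubic in `∂E` and
two terms with a second derivative of `E`. -/
theorem nu2_split (hE : S.AntiSymp E Einv) (hJ : S.JacobiId E) (m : ι) :
    ∑ a, ∑ b, ∑ c, ∑ d, sgn (S.ε a * S.ε c) •
        (K S E m (S.D d (E a b)) * (Einv b c * S.D a (E c d)))
    = - ∑ a, ∑ b, ∑ c, ∑ d, ∑ e, sgn (S.ε a * S.ε c + (S.ε m + 1) * S.ε d) •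
          (S.D d (E m e) * S.D e (E a b) * (Einv b c * S.D a (E c d)))
      - ∑ a, ∑ b, ∑ c, ∑ d, ∑ e,
          sgn (S.ε a * S.ε c + (S.ε m + 1) * (S.ε d + S.ε a + S.ε b)) •
          (S.D d (E a e) * S.D e (E b m) * (Einv b c * S.D a (E c d)))
      - ∑ a, ∑ b, ∑ c, ∑ d, ∑ e,
          sgn (S.ε a * S.ε c + (S.ε m + 1) * S.ε d + (S.ε b + 1) * (S.ε a + S.ε m)) •
          (S.D d (E b e) * S.D e (E m a) * (Einv b c * S.D a (E c d)))
      - ∑ a, ∑ b, ∑ c, ∑ d,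
          sgn (S.ε a * S.ε c + (S.ε m + 1) * (S.ε d + S.ε a + S.ε b) + (S.ε a + 1) * S.ε d) •
          (K S E a (S.D d (E b m)) * (Einv b c * S.D a (E c d)))
      - ∑ a, ∑ b, ∑ c, ∑ d,
          sgn (S.ε a * S.ε c + (S.ε m + 1) * S.ε d + (S.ε b + 1) * (S.ε a + S.ε m)
            + (S.ε b + 1) * S.ε d) •
          (K S E b (S.D d (E m a)) * (Einv b c * S.D a (E c d))) := by
  simp only [← Finset.sum_neg_distrib, ← Finset.sum_sub_distrib]
  refine Finset.sum_congr rfl fun a _ => Finset.sum_congr rfl fun b _ =>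
    Finset.sum_congr rfl fun c _ => Finset.sum_congr rfl fun d _ => ?_
  simp only [Finset.sum_sub_distrib, Finset.sum_neg_distrib, ← Finset.smul_sum, ← Finset.sum_mul]
  rw [K_DE hE hJ]
  simp only [sub_mul, neg_smul, neg_mul, smul_mul_assoc]
  generalize S.ε a = a', S.ε b = b', S.ε c = c', S.ε d = d', S.ε m = m'
  revert a' b' c' d' m'
  simp only [zmod_forall, sgn_zero, sgn_one, one_add_one_zmod, mul_zero, zero_mul, mul_one,
    add_zero, zero_add]
  and_intros <;> first | trivial | module

/-- The first and the third term of `nu2_split` cancel, by a renaming of the summation indices. -/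
theorem nu2_cancel (hE : S.AntiSymp E Einv) (m : ι) :
    ∑ a, ∑ b, ∑ c, ∑ d, ∑ e,
          sgn (S.ε a * S.ε c + (S.ε m + 1) * S.ε d + (S.ε b + 1) * (S.ε a + S.ε m)) •
          (S.D d (E b e) * S.D e (E m a) * (Einv b c * S.D a (E c d)))
    = - ∑ a, ∑ b, ∑ c, ∑ d, ∑ e, sgn (S.ε a * S.ε c + (S.ε m + 1) * S.ε d) •
          (S.D d (E m e) * S.D e (E a b) * (Einv b c * S.D a (E c d))) := by
  rw [← sum_five_perm]
  simp only [← Finset.sum_neg_distrib]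
  refine Finset.sum_congr rfl fun a _ => Finset.sum_congr rfl fun b _ =>
    Finset.sum_congr rfl fun c _ => Finset.sum_congr rfl fun d _ =>
    Finset.sum_congr rfl fun e _ => ?_
  rw [mul_assoc, mul_lcomm (DE_mem hE a c d) (DE_mem hE d m e),
    mul_reverse (DE_mem hE a c d) (hE.Einv_mem c b) (DE_mem hE e b a), DE_sk hE e b a,
    Einv_sk hE c b]
  simp only [mul_smul_comm, smul_mul_assoc, mul_assoc]
  generalize S.ε a = a', S.ε b = b', S.ε c = c', S.ε d = d', S.ε m = m', S.ε e = e'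
  revert a' b' c' d' m' e'
  simp only [zmod_forall, sgn_zero, sgn_one, one_add_one_zmod, mul_zero, zero_mul, mul_one,
    add_zero, zero_add]
  and_intros <;> first | trivial | module

/-- The last term of `nu2_split`: the inverse matrix and `K^b` contract to a derivative. -/
theorem nu2_second (hE : S.AntiSymp E Einv) (m : ι) :
    ∑ a, ∑ b, ∑ c, ∑ d,
          sgn (S.ε a * S.ε c + (S.ε m + 1) * S.ε d + (S.ε b + 1) * (S.ε a + S.ε m)
            + (S.ε b + 1) * S.ε d) •
          (K S E b (S.D d (E m a)) * (Einv b c * S.D a (E c d))) = Q S E m := by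
  have h : ∀ a c d, ∑ b, sgn (S.ε a * S.ε c + (S.ε m + 1) * S.ε d
            + (S.ε b + 1) * (S.ε a + S.ε m) + (S.ε b + 1) * S.ε d) •
          (K S E b (S.D d (E m a)) * (Einv b c * S.D a (E c d)))
      = sgn (S.ε c + S.ε c * S.ε d) • (S.D a (E c d) * S.D c (S.D d (E a m))) := by
    intro a c d
    rw [S.supercomm (DE_mem hE a c d) (DDE_mem hE c d a m), ← Einv_K hE c (S.D d (E a m)),
      Finset.sum_mul, Finset.smul_sum, Finset.smul_sum]
    refine Finset.sum_congr rfl fun b _ => ?_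
    rw [mul_lcomm (K_mem hE b (DE_mem hE d m a)) (hE.Einv_mem b c), Einv_sk hE b c,
      DE_sk hE d m a]
    simp only [mul_smul_comm, smul_mul_assoc, mul_assoc, map_smul]
    generalize S.ε a = a', S.ε b = b', S.ε c = c', S.ε d = d', S.ε m = m'
    revert a' b' c' d' m'
    simp only [zmod_forall, sgn_zero, sgn_one, one_add_one_zmod, mul_zero, zero_mul, mul_one,
      add_zero, zero_add]
    and_intros <;> first | trivial | module
  rw [Q]
  refine Finset.sum_congr rfl fun a _ => ?_
  rw [Finset.sum_comm]
  refine Finset.sum_congr rfl fun c _ => ?_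
  rw [Finset.sum_comm]
  exact Finset.sum_congr rfl fun d _ => h a c d

/-- The fourth term of `nu2_split`. It is symmetrized in the indices of the second derivative of
`E`, so that the Jacobi identity turns two terms into one in which the inverse matrix can be
contracted; hence the factor `1/2` against `nu2_second`. -/
theorem nu2_first (hE : S.AntiSymp E Einv) (hJ : S.JacobiId E) (m : ι) :
    ∑ a, ∑ b, ∑ c, ∑ d,
          sgn (S.ε a * S.ε c + (S.ε m + 1) * (S.ε d + S.ε a + S.ε b) + (S.ε a + 1) * S.ε d) •
          (K S E a (S.D d (E b m)) * (Einv b c * S.D a (E c d))) = (1/2 : ℚ) • Q S E m := by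
  have h1 : ∀ b c d, ∑ a,
        sgn (S.ε a * S.ε c + (S.ε m + 1) * (S.ε d + S.ε a + S.ε b) + (S.ε a + 1) * S.ε d) •
          (K S E a (S.D d (E b m)) * (Einv b c * S.D a (E c d)))
      = ∑ e, sgn (S.ε m * S.ε d + S.ε m * S.ε b + S.ε b + S.ε e * S.ε m + S.ε e * S.ε d +
          S.ε e * S.ε c + S.ε m + S.ε d + S.ε c + S.ε e) •
          (S.D e (S.D d (E b m)) * (Einv b c * K S E e (E c d))) := by
    intro b c d
    simp only [K_apply, Finset.sum_mul, Finset.mul_sum, Finset.smul_sum]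
    rw [Finset.sum_comm]
    refine Finset.sum_congr rfl fun e _ => Finset.sum_congr rfl fun a _ => ?_
    rw [mul_assoc, mul_lcomm (hE.Einv_mem b c) (hE.E_mem e a), mul_smul_comm,
      mul_lcomm (DDE_mem hE e d b m) (hE.E_mem e a), E_sk hE e a]
    simp only [mul_smul_comm, smul_mul_assoc, mul_assoc, map_smul]
    generalize S.ε a = a', S.ε b = b', S.ε c = c', S.ε d = d', S.ε m = m', S.ε e = e'
    revert a' b' c' d' m' e'
    simp only [zmod_forall, sgn_zero, sgn_one, one_add_one_zmod, mul_zero, zero_mul, mul_one,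
      add_zero, zero_add]
    and_intros <;> first | trivial | module
  -- Symmetrization in `d` and `e`, followed by the Jacobi identity for `e`, `c`, `d`.
  have h2 : ∀ b c, ∑ d, ∑ e, sgn (S.ε m * S.ε d + S.ε m * S.ε b + S.ε b + S.ε e * S.ε m +
          S.ε e * S.ε d + S.ε e * S.ε c + S.ε m + S.ε d + S.ε c + S.ε e) •
          (S.D e (S.D d (E b m)) * (Einv b c * K S E e (E c d)))
      = ∑ d, ∑ e, (1/2 : ℚ) • sgn (S.ε m * (S.ε d + S.ε b + S.ε e + 1) + S.ε b + S.ε e + 1) •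
          (S.D e (S.D d (E b m)) * (Einv b c * K S E c (E d e))) := by
    intro b c
    refine sum_eq_of_symm fun d e => ?_
    have h := congrArg (fun x => S.D e (S.D d (E b m)) * (Einv b c * x)) (eJacobi hJ e c d)
    rw [S.D_comm d e, E_sk hE e d, E_sk hE c e]
    simp only [mul_add (S.D _ _), mul_add (Einv _ _), smul_add, mul_smul_comm, smul_mul_assoc,
      mul_assoc, map_smul, mul_zero] at h ⊢
    revert h
    generalize S.ε b = b', S.ε c = c', S.ε d = d', S.ε m = m', S.ε e = e'
    revert b' c' d' m' e'
    simp only [zmod_forall, sgn_zero, sgn_one, one_add_one_zmod, mul_zero, zero_mul, mul_one,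
      add_zero, zero_add]
    and_intros <;> intro h <;>
      first
      | linear_combination (norm := module) (1 : ℚ) • h
      | linear_combination (norm := module) (-1 : ℚ) • h
  have h3 : ∀ b d e, ∑ c, (1/2 : ℚ) • sgn (S.ε m * (S.ε d + S.ε b + S.ε e + 1) + S.ε b + S.ε e
            + 1) • (S.D e (S.D d (E b m)) * (Einv b c * K S E c (E d e)))
      = (1/2 : ℚ) • sgn (S.ε d + S.ε d * S.ε e) • (S.D b (E d e) * S.D d (S.D e (E b m))) := by
    intro b d e
    rw [← Finset.smul_sum, ← Finset.smul_sum, ← Finset.mul_sum, Einv_K hE b (E d e),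
      S.supercomm (DE_mem hE b d e) (DDE_mem hE d e b m), S.D_comm e d]
    simp only [smul_mul_assoc]
    generalize S.ε b = b', S.ε d = d', S.ε m = m', S.ε e = e'
    revert b' d' m' e'
    simp only [zmod_forall, sgn_zero, sgn_one, one_add_one_zmod, mul_zero, zero_mul, mul_one,
      add_zero, zero_add]
    and_intros <;> first | trivial | module
  rw [Finset.sum_comm, Q]
  simp only [Finset.smul_sum]
  refine Finset.sum_congr rfl fun b _ => ?_
  have h4 : ∀ c, ∑ a, ∑ d,
          sgn (S.ε a * S.ε c + (S.ε m + 1) * (S.ε d + S.ε a + S.ε b) + (S.ε a + 1) * S.ε d) •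
          (K S E a (S.D d (E b m)) * (Einv b c * S.D a (E c d)))
      = ∑ d, ∑ e, (1/2 : ℚ) • sgn (S.ε m * (S.ε d + S.ε b + S.ε e + 1) + S.ε b + S.ε e + 1) •
          (S.D e (S.D d (E b m)) * (Einv b c * K S E c (E d e))) := by
    intro c
    rw [Finset.sum_comm, ← h2 b c]
    exact Finset.sum_congr rfl fun d _ => h1 b c d
  rw [Finset.sum_comm]
  simp only [h4]
  rw [Finset.sum_comm]
  refine Finset.sum_congr rfl fun d _ => ?_
  rw [Finset.sum_comm]
  exact Finset.sum_congr rfl fun e _ => h3 b d e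

/-- In `-3 = -2 (1 + 1/2)` the factor `2` is that of `K_nu2`, and the two summands come from
`nu2_second` and `nu2_first`. -/
theorem K_nu2_eq (hE : S.AntiSymp E Einv) (hJ : S.JacobiId E) (m : ι) :
    K S E m (S.nu2 E Einv) = (-3 : ℚ) • Q S E m := by
  rw [K_nu2 hE, nu2_Einv_part hE hJ, nu2_split hE hJ, nu2_cancel hE, nu2_second hE,
    nu2_first hE hJ]
  module

theorem nu2_mem (hE : S.AntiSymp E Einv) : S.nu2 E Einv ∈ S.hom 1 := by
  refine Submodule.sum_mem _ fun a _ => Submodule.sum_mem _ fun b _ =>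
    Submodule.sum_mem _ fun c _ => Submodule.sum_mem _ fun d _ => Submodule.smul_mem _ _ ?_
  have h := S.mul_mem (DE_mem hE d a b) (S.mul_mem (hE.Einv_mem b c) (DE_mem hE a c d))
  convert h using 2
  clear h
  generalize S.ε a = a', S.ε b = b', S.ε c = c', S.ε d = d'
  revert a' b' c' d'
  decide

/-- The residual vector field is the Hamiltonian vector field of `ν^{(2)}/3`. -/
theorem Hop_nu2 (hE : S.AntiSymp E Einv) (hJ : S.JacobiId E) (f : A) :
    ∑ c, S.D c (S.nu2 E Einv) * K S E c f = (3 : ℚ) • ∑ d, Q S E d * S.D d f := by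
  have h : ∑ c, S.D c (S.nu2 E Einv) * K S E c f
      = - ∑ d, K S E d (S.nu2 E Einv) * S.D d f := by
    simp only [K_apply, Finset.mul_sum, Finset.sum_mul, ← Finset.sum_neg_distrib]
    rw [Finset.sum_comm]
    refine Finset.sum_congr rfl fun d _ => Finset.sum_congr rfl fun c _ => ?_
    rw [mul_lcomm (S.D_mem c (nu2_mem hE)) (hE.E_mem c d), E_sk hE c d]
    simp only [smul_mul_assoc, mul_assoc]
    generalize S.ε c = c', S.ε d = d'
    revert c' d'
    simp only [zmod_forall, sgn_zero, sgn_one, one_add_one_zmod, mul_zero, zero_mul, mul_one,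
      add_zero, zero_add]
    and_intros <;> first | trivial | module
  simp only [h, K_nu2_eq hE hJ, smul_mul_assoc, ← Finset.smul_sum]
  module

end

/-- Proposition 1: `ν_F = ν_F^{(0)} + ν^{(1)}/8 - ν^{(2)}/24` solves the
differential equation `Δ_F² - (1/2)Δ_{F,R} = (ν_F,·)`, even for non-flat `F`. -/
theorem nuF_solves_differential_equation
    {ι : Type} [Fintype ι] [DecidableEq ι] {A : Type} [Ring A] [Algebra ℚ A]
    (S : SuperAlg ι A) (E Einv : ι → ι → A) (F : ι → A)
    (hE : S.AntiSymp E Einv) (hF : ∀ a, F a ∈ S.hom (S.ε a))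
    (hJac : S.JacobiId E) :
    (S.lap F E) ∘ₗ (S.lap F E)
      - (1/2 : ℚ) • S.lap F (fun a b => S.curvUp E F a b)
      = S.Hop E (S.nuF E Einv F) := by
  ext f
  simp only [LinearMap.sub_apply, LinearMap.smul_apply, LinearMap.comp_apply, Hop_apply]
  have h1 := four_lap_sq hE hF f
  have h2 := two_lap_curv (S := S) (F := F) E f
  have h3 := N_N_K_K hE hF hJac f
  have h4 := curvature_part hE hF hJac f
  have h5 := Finset.sum_congr (rfl : (Finset.univ : Finset ι) = Finset.univ)
    fun c _ => second_order hE hF c (K S E c f)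
  have h6 := Finset.sum_congr (rfl : (Finset.univ : Finset ι) = Finset.univ)
    fun c _ => congrArg (· * K S E c f) (coefficient hE hF c)
  have h7 := second_order_residue hE hJac f
  have h8 := Hop_nu2 hE hJac f
  simp only [Finset.sum_sub_distrib, Finset.sum_add_distrib, ← Finset.smul_sum,
    add_mul _ _ (K S E _ f), smul_mul_assoc] at h1 h2 h3 h4 h5 h6 h7
  have h9 : ∑ c, S.D c (S.nuF E Einv F) * K S E c f =
      ∑ c, S.D c (S.nuF0 E F) * K S E c f + (1/8 : ℚ) • ∑ c, S.D c (S.nu1 E) * K S E c f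
      - (1/24 : ℚ) • ∑ c, S.D c (S.nu2 E Einv) * K S E c f := by
    simp only [nuF, map_add, map_sub, map_smul, add_mul, sub_mul, smul_mul_assoc,
      Finset.sum_add_distrib, Finset.sum_sub_distrib, Finset.smul_sum]
  rw [h9]
  -- The sums occur as common atoms: a quarter of the formula for `4Δ_F²`, with `h7` and `h8`
  -- trading the residual second-order term for `-ν^{(2)}/24`.
  linear_combination (norm := module) (1/4 : ℚ) • h1 - (1/4 : ℚ) • h2 + (1/4 : ℚ) • h3
    + (1/4 : ℚ) • h4 + (1/4 : ℚ) • h5 + (1/4 : ℚ) • h6 - (1/8 : ℚ) • h7 + (1/24 : ℚ) • h8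

end SuperAlg
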